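/- arXiv:1208.5548 — 6 statements merged into one kernel-verified Lean document; each statement's English description precedes it below -/
import Mathlib

section
/- Let f be a non-negative C¹ function on the circle of length 1 (equivalently, a non-negative continuously differentiable 1-periodic function f : ℝ → ℝ) satisfying ∫₀¹ f(x)² dx = 1. Then 4π² ∫₀¹ f(x)² log f(x) dx ≤ ∫₀¹ f'(x)² dx. -/
/-!
The proof follows the heat flow (Bakry-Émery) argument, in the form due to Émery and Yukich.
Put `g = f²`, so that the claim reads `∫ g log g - (8π²)⁻¹ ∫ g'²/g ≤ m log m` with `m = ∫ g`.
Let `g` evolve by `∂ₜg = g''`. The entropy `∫ g log g` then has derivative `-I`, where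
`I = ∫ g'²/g` is the Fisher information, and it tends to `m log m`. So it is enough that
`I' ≤ -8π² I`: this makes `∫ g log g - I/(8π²)` nondecreasing. With `w = g'/√g`, integrations by
parts give `-I' = 2 ∫ w'² + (1/6) ∫ g'⁴/g³`, while `I = ∫ w²`; since `w = 2(√g)'` has mean zero,
Wirtinger's inequality `∫ w'² ≥ 4π² ∫ w²` gives the bound (`fisher_dissipation`).

The flow is run only on positive trigonometric polynomials, where it is an explicit finite sum;
positivity is preserved because the flow is convolution with a Gaussian (`trig_lower_bound`). This
gives `trig_logSobolev`. Positive `C¹` densities are reached by `C¹` approximation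
(`exists_trig_approx`, `logSobolev_of_pos`), and a general `f` by applying the result to `(f + ε)²`
and letting `ε → 0`.
-/

open Real MeasureTheory intervalIntegral

/-! ### Wirtinger's inequality -/

/-- Wirtinger's inequality, i.e. the spectral gap `4π²` of the circle: by Parseval, it follows from
`|ŵ'(k)|² = 4π²k² |ŵ(k)|²` and `ŵ(0) = 0`. -/
theorem wirtinger {w w' : ℝ → ℝ} (hw : ∀ x, HasDerivAt w (w' x) x) (hw' : Continuous w')
    (hper : w 1 = w 0) (hmean : ∫ x in (0:ℝ)..1, w x = 0) :
    4 * π ^ 2 * ∫ x in (0:ℝ)..1, w x ^ 2 ≤ ∫ x in (0:ℝ)..1, w' x ^ 2 := by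
  have hwc : Continuous w := continuous_iff_continuousAt.2 fun x => (hw x).continuousAt
  have hL : ∀ {g : ℝ → ℝ}, Continuous g →
      HasSum (fun i => ‖fourierCoeffOn zero_lt_one (fun x => (g x : ℂ)) i‖ ^ 2)
        (∫ x in (0:ℝ)..1, g x ^ 2) := by
    intro g hg
    have hgC : Continuous fun x => (g x : ℂ) := Complex.continuous_ofReal.comp hg
    have h2 : MemLp (fun x => (g x : ℂ)) 2 (volume.restrict (Set.Ioc (0:ℝ) 1)) := by
      rw [memLp_two_iff_integrable_sq_norm hgC.aestronglyMeasurable]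
      exact ((hgC.norm.pow 2).intervalIntegrable 0 1).1
    simpa using hasSum_sq_fourierCoeffOn zero_lt_one h2
  refine hasSum_le (fun i => ?_) ((hL hwc).mul_left (4 * π ^ 2)) (hL hw')
  rcases eq_or_ne i 0 with rfl | hi
  · have : fourierCoeffOn zero_lt_one (fun x => (w x : ℂ)) 0 = 0 := by
      rw [fourierCoeffOn_eq_integral]
      simp only [neg_zero, fourier_zero, one_smul, intervalIntegral.integral_ofReal, hmean]
      simp
    rw [this]
    simp
  · have key := fourierCoeffOn_of_hasDerivAt (f := fun x => (w x : ℂ)) (f' := fun x => (w' x : ℂ))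
      zero_lt_one hi (fun x _ => (hw x).ofReal_comp)
      ((Complex.continuous_ofReal.comp hw').intervalIntegrable _ _)
    rw [key, hper]
    have hi1 : (1:ℝ) ≤ (i:ℝ) ^ 2 := by
      have : (1:ℤ) ≤ i ^ 2 := by have := sq_pos_of_ne_zero hi; omega
      exact_mod_cast this
    simp only [sub_self, mul_zero, zero_sub, norm_mul, norm_neg, norm_div, norm_one]
    simp [mul_pow, abs_of_pos pi_pos]
    have hp := pi_pos
    set A := ‖fourierCoeffOn zero_lt_one (fun x => (w' x : ℂ)) i‖ ^ 2
    have hA : 0 ≤ A := by positivity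
    field_simp
    rw [div_le_iff₀ (by linarith)]
    nlinarith

/-! ### Parametric integrals -/

/-- Differentiation under the integral for `t > 0`; the domination comes from compactness of
`[t/2, 2t] × [0,1]`. -/
theorem hasDerivAt_integral_param {F F' : ℝ → ℝ → ℝ}
    (hF : ∀ t > 0, Continuous (F t))
    (hder : ∀ t > 0, ∀ x, HasDerivAt (fun s => F s x) (F' t x) t)
    (hF' : ContinuousOn (Function.uncurry F') (Set.Ioi 0 ×ˢ Set.univ)) {t : ℝ} (ht : 0 < t) :
    HasDerivAt (fun s => ∫ x in (0:ℝ)..1, F s x) (∫ x in (0:ℝ)..1, F' t x) t := by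
  obtain ⟨C, hC⟩ := (isCompact_Icc.prod isCompact_Icc : IsCompact
    (Set.Icc (t/2) (2*t) ×ˢ Set.Icc (0:ℝ) 1)).exists_bound_of_continuousOn
    (hF'.mono fun p hp => ⟨lt_of_lt_of_le (by linarith) hp.1.1, trivial⟩)
  have hF't : Continuous (F' t) := by
    rw [← continuousOn_univ]
    exact hF'.comp (f := fun x => (t, x)) (by fun_prop) fun x _ => ⟨ht, trivial⟩
  refine (hasDerivAt_integral_of_dominated_loc_of_deriv_le (bound := fun _ => C)
    (s := Set.Ioo (t/2) (2*t)) (Ioo_mem_nhds (by linarith) (by linarith)) ?_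
    ((hF t ht).intervalIntegrable _ _) hF't.aestronglyMeasurable ?_ (by simp) ?_).2
  · filter_upwards [lt_mem_nhds ht] with s hs using (hF s hs).aestronglyMeasurable
  · refine Filter.Eventually.of_forall fun x hx s hs => hC (s, x) ⟨⟨hs.1.le, hs.2.le⟩, ?_⟩
    rw [Set.uIoc_of_le zero_le_one] at hx
    exact ⟨hx.1.le, hx.2⟩
  · exact Filter.Eventually.of_forall fun x hx s hs => hder s (by have := hs.1; linarith) x

/-! ### Heat flow of trigonometric polynomials -/

/-- The real trigonometric polynomial with frequencies `k ∈ s` and coefficients `a k` (cosine) and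
`b k` (sine), evolved for time `t` by the heat equation `∂ₜ = ∂ₓ²` on the circle of length `1`.
At `t = 0` it is the polynomial itself. -/
noncomputable def trig (s : Finset ℤ) (a b : ℤ → ℝ) (t x : ℝ) : ℝ :=
  ∑ k ∈ s, exp (-((2 * π * k) ^ 2 * t)) * (a k * cos (2 * π * k * x) + b k * sin (2 * π * k * x))

theorem trig_continuous (s : Finset ℤ) (a b : ℤ → ℝ) :
    Continuous (Function.uncurry (trig s a b)) := by
  unfold trig Function.uncurry
  fun_prop

theorem trig_add_one (s : Finset ℤ) (a b : ℤ → ℝ) (t x : ℝ) :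
    trig s a b t (x + 1) = trig s a b t x := by
  unfold trig
  refine Finset.sum_congr rfl fun k _ => ?_
  rw [show 2 * π * k * (x + 1) = 2 * π * k * x + k * (2 * π) by ring,
    Real.cos_add_int_mul_two_pi, Real.sin_add_int_mul_two_pi]

theorem trig_hasDerivAt_x (s : Finset ℤ) (a b : ℤ → ℝ) (t x : ℝ) :
    HasDerivAt (trig s a b t)
      (trig s (fun k => 2 * π * k * b k) (fun k => -(2 * π * k * a k)) t x) x := by
  unfold trig
  refine HasDerivAt.fun_sum fun k _ => ?_
  have h : HasDerivAt (fun x : ℝ => 2 * π * k * x) (2 * π * k) x := by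
    simpa using (hasDerivAt_id x).const_mul (2 * π * (k:ℝ))
  exact (((h.cos.const_mul (a k)).fun_add (h.sin.const_mul (b k))).const_mul
    (exp (-((2 * π * k) ^ 2 * t)))).congr_deriv (by ring)

theorem trig_hasDerivAt_t (s : Finset ℤ) (a b : ℤ → ℝ) (t x : ℝ) :
    HasDerivAt (fun t => trig s a b t x)
      (trig s (fun k => 2 * π * k * -(2 * π * k * a k)) (fun k => -(2 * π * k * (2 * π * k * b k)))
        t x) t := by
  unfold trig
  refine HasDerivAt.fun_sum fun k _ => ?_
  have h : HasDerivAt (fun t : ℝ => -((2 * π * k) ^ 2 * t)) (-((2 * π * k) ^ 2)) t := by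
    simpa using ((hasDerivAt_id t).const_mul ((2 * π * (k:ℝ)) ^ 2)).fun_neg
  exact (h.exp.mul_const (a k * cos (2 * π * k * x) + b k * sin (2 * π * k * x))).congr_deriv
    (by ring)

/-- Real and imaginary parts of the characteristic function of a centred Gaussian. -/
theorem gaussian_trig (lam : ℝ) (v : NNReal) :
    ∫ z, cos (lam * z) ∂(ProbabilityTheory.gaussianReal 0 v) = exp (-(lam ^ 2 * v / 2)) ∧
    ∫ z, sin (lam * z) ∂(ProbabilityTheory.gaussianReal 0 v) = 0 := by
  have h := ProbabilityTheory.charFun_gaussianReal (μ := 0) (v := v) lam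
  rw [charFun_apply_real] at h
  have hint : Integrable (fun z : ℝ => Complex.exp (lam * z * Complex.I))
      (ProbabilityTheory.gaussianReal 0 v) := by
    refine Integrable.of_bound (by fun_prop) 1 (Filter.Eventually.of_forall fun z => ?_)
    rw [← Complex.ofReal_mul, Complex.norm_exp_ofReal_mul_I]
  have hR : ((exp (-(lam ^ 2 * v / 2)) : ℝ) : ℂ) =
      ∫ z : ℝ, Complex.exp (lam * z * Complex.I) ∂(ProbabilityTheory.gaussianReal 0 v) := by
    rw [h]; push_cast; congr 1; ring
  constructor
  · have := integral_re hint
    rw [← hR, RCLike.re_to_complex, Complex.ofReal_re] at this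
    simpa [← Complex.ofReal_mul, Complex.exp_ofReal_mul_I_re] using this
  · have := integral_im hint
    rw [← hR, RCLike.im_to_complex, Complex.ofReal_im] at this
    simpa [← Complex.ofReal_mul, Complex.exp_ofReal_mul_I_im] using this

/-- The heat flow is convolution with the Gaussian of variance `2t`. -/
theorem trig_eq_gaussian (s : Finset ℤ) (a b : ℤ → ℝ) (t : NNReal) (x : ℝ) :
    trig s a b t x =
      ∫ z, trig s a b 0 (x + z) ∂(ProbabilityTheory.gaussianReal 0 (2 * t)) := by
  unfold trig
  have hc : ∀ l : ℝ, Integrable (fun z => cos (l * z))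
      (ProbabilityTheory.gaussianReal 0 (2 * t)) := fun l =>
    Integrable.of_bound (by fun_prop) 1 (Filter.Eventually.of_forall fun z => abs_cos_le_one _)
  have hs : ∀ l : ℝ, Integrable (fun z => sin (l * z))
      (ProbabilityTheory.gaussianReal 0 (2 * t)) := fun l =>
    Integrable.of_bound (by fun_prop) 1 (Filter.Eventually.of_forall fun z => abs_sin_le_one _)
  have e : ∀ (k : ℤ) (z : ℝ), exp (-((2 * π * k) ^ 2 * 0)) *
      (a k * cos (2 * π * k * (x + z)) + b k * sin (2 * π * k * (x + z))) =
      (a k * cos (2 * π * k * x) + b k * sin (2 * π * k * x)) * cos (2 * π * k * z) +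
      (b k * cos (2 * π * k * x) - a k * sin (2 * π * k * x)) * sin (2 * π * k * z) := by
    intro k z
    rw [mul_add (2 * π * (k:ℝ)) x z, cos_add, sin_add]
    simp
    ring
  simp_rw [e]
  rw [MeasureTheory.integral_finsetSum]
  · refine Finset.sum_congr rfl fun k _ => ?_
    rw [MeasureTheory.integral_add ((hc _).const_mul _) ((hs _).const_mul _), MeasureTheory.integral_const_mul,
      MeasureTheory.integral_const_mul, (gaussian_trig _ _).1, (gaussian_trig _ _).2]
    push_cast
    ring_nf
  · exact fun k _ => ((hc _).const_mul _).add ((hs _).const_mul _)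

theorem trig_bound (s : Finset ℤ) (a b : ℤ → ℝ) {t : ℝ} (ht : 0 ≤ t) (x : ℝ) :
    |trig s a b t x| ≤ ∑ k ∈ s, (|a k| + |b k|) := by
  refine (Finset.abs_sum_le_sum_abs _ _).trans (Finset.sum_le_sum fun k _ => ?_)
  rw [abs_mul, abs_exp]
  have h1 : exp (-((2 * π * k) ^ 2 * t)) ≤ 1 := exp_le_one_iff.2 (by simp; positivity)
  have h2 : |a k * cos (2 * π * k * x) + b k * sin (2 * π * k * x)| ≤ |a k| + |b k| := by
    refine (abs_add_le _ _).trans (add_le_add ?_ ?_) <;> rw [abs_mul]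
    · exact mul_le_of_le_one_right (abs_nonneg _) (abs_cos_le_one _)
    · exact mul_le_of_le_one_right (abs_nonneg _) (abs_sin_le_one _)
  exact (mul_le_of_le_one_left (abs_nonneg _) h1).trans h2

/-- The minimum principle for the heat flow. -/
theorem trig_lower_bound {s : Finset ℤ} {a b : ℤ → ℝ} {d : ℝ} (h : ∀ x, d ≤ trig s a b 0 x)
    {t : ℝ} (ht : 0 ≤ t) (x : ℝ) : d ≤ trig s a b t x := by
  lift t to NNReal using ht
  rw [trig_eq_gaussian]
  have hcont : Continuous fun z => trig s a b 0 (x + z) :=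
    (trig_continuous s a b).comp (f := fun z => (0, x + z)) (by fun_prop)
  have hint : Integrable (fun z => trig s a b 0 (x + z))
      (ProbabilityTheory.gaussianReal 0 (2 * t)) := by
    refine Integrable.of_bound hcont.aestronglyMeasurable (∑ k ∈ s, (|a k| + |b k|))
      (Filter.Eventually.of_forall fun z => ?_)
    exact trig_bound s a b le_rfl _
  calc d = ∫ _z, d ∂(ProbabilityTheory.gaussianReal 0 (2 * t)) := by simp
    _ ≤ _ := integral_mono (integrable_const _) hint fun z => h _

/-! ### Fisher information and entropy along the heat flow -/

theorem integral_deriv_eq_zero {u u' : ℝ → ℝ} (hu : ∀ x, HasDerivAt u (u' x) x)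
    (hu' : Continuous u') (hper : u 1 = u 0) : ∫ x in (0:ℝ)..1, u' x = 0 := by
  rw [integral_eq_sub_of_hasDerivAt (fun x _ => hu x) (hu'.intervalIntegrable _ _), hper, sub_self]

/-- Exponential decay of the Fisher information `∫ g'²/g` at rate `8π²` along the heat flow: the
right side is minus its time derivative when `∂ₜg = g''` and `∂ₜg' = g'''`. Up to total derivatives it
is `2 ∫ w'² + (1/6) ∫ g'⁴/g³` with `w = g'/√g = 2(√g)'`, and Wirtinger's inequality applies to `w`. -/
theorem fisher_dissipation {g g1 g2 g3 : ℝ → ℝ} (hg : ∀ x, HasDerivAt g (g1 x) x)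
    (hg1 : ∀ x, HasDerivAt g1 (g2 x) x) (hg2 : ∀ x, HasDerivAt g2 (g3 x) x)
    (hg3 : Continuous g3) (hpos : ∀ x, 0 < g x)
    (p0 : g 1 = g 0) (p1 : g1 1 = g1 0) (p2 : g2 1 = g2 0) :
    8 * π ^ 2 * ∫ x in (0:ℝ)..1, g1 x ^ 2 / g x ≤
      ∫ x in (0:ℝ)..1, (g1 x ^ 2 * g2 x / g x ^ 2 - 2 * g1 x * g3 x / g x) := by
  have c0 : Continuous g := continuous_iff_continuousAt.2 fun x => (hg x).continuousAt
  have c1 : Continuous g1 := continuous_iff_continuousAt.2 fun x => (hg1 x).continuousAt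
  have c2 : Continuous g2 := continuous_iff_continuousAt.2 fun x => (hg2 x).continuousAt
  have hne : ∀ x, g x ≠ 0 := fun x => (hpos x).ne'
  have hsne : ∀ x, √(g x) ≠ 0 := fun x => (sqrt_pos.2 (hpos x)).ne'
  have hsq : ∀ x, √(g x) ^ 2 = g x := fun x => sq_sqrt (hpos x).le
  have hs : ∀ x, HasDerivAt (fun x => √(g x)) (g1 x / (2 * √(g x))) x :=
    fun x => (hg x).sqrt (hne x)
  have cw' : Continuous fun x => (g2 x * √(g x) - g1 x * (g1 x / (2 * √(g x)))) / √(g x) ^ 2 := by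
    refine Continuous.div ?_ (by fun_prop) (fun x => pow_ne_zero 2 (hsne x))
    refine (by fun_prop : Continuous fun x => g2 x * √(g x)).sub (c1.mul (c1.div (by fun_prop) ?_))
    exact fun x => mul_ne_zero two_ne_zero (hsne x)
  have hW := wirtinger (w := fun x => g1 x / √(g x)) (fun x => (hg1 x).fun_div (hs x) (hsne x)) cw'
    (by simp only [p0, p1]) (by
      refine integral_deriv_eq_zero (u := fun x => 2 * √(g x)) (fun x => ?_)
        (c1.div (by fun_prop) hsne) (by simp only [p0])
      refine ((hs x).const_mul 2).congr_deriv ?_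
      have := hsne x
      field_simp)
  have q1 : Continuous fun x => g2 x ^ 2 / g x := (c2.pow 2).div c0 hne
  have q2 : Continuous fun x => g1 x * g3 x / g x := (c1.mul hg3).div c0 hne
  have q3 : Continuous fun x => g1 x ^ 2 * g2 x / g x ^ 2 :=
    ((c1.pow 2).mul c2).div (c0.pow 2) fun x => pow_ne_zero 2 (hne x)
  have q4 : Continuous fun x => g1 x ^ 4 / g x ^ 3 :=
    (c1.pow 4).div (c0.pow 3) fun x => pow_ne_zero 3 (hne x)
  have hD1 := integral_deriv_eq_zero (u := fun x => g1 x * g2 x / g x)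
    (u' := fun x => g2 x ^ 2 / g x + g1 x * g3 x / g x - g1 x ^ 2 * g2 x / g x ^ 2)
    (fun x => (((hg1 x).fun_mul (hg2 x)).fun_div (hg x) (hne x)).congr_deriv (by
      have := hne x
      field_simp))
    (by fun_prop) (by simp only [p0, p1, p2])
  have hD2 := integral_deriv_eq_zero (u := fun x => g1 x ^ 3 / g x ^ 2)
    (u' := fun x => 3 * (g1 x ^ 2 * g2 x / g x ^ 2) - 2 * (g1 x ^ 4 / g x ^ 3))
    (fun x => (((hg1 x).fun_pow 3).fun_div ((hg x).fun_pow 2)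
      (pow_ne_zero 2 (hne x))).congr_deriv (by
      have := hne x
      push_cast
      field_simp))
    (by fun_prop) (by simp only [p0, p1])
  have hQ : 0 ≤ ∫ x in (0:ℝ)..1, g1 x ^ 4 / g x ^ 3 :=
    integral_nonneg zero_le_one fun x _ => by have := hpos x; positivity
  have e1 : ∫ x in (0:ℝ)..1, (g1 x / √(g x)) ^ 2 = ∫ x in (0:ℝ)..1, g1 x ^ 2 / g x :=
    integral_congr fun x _ => by simp only [div_pow, hsq]
  have e2 : ∫ x in (0:ℝ)..1, ((g2 x * √(g x) - g1 x * (g1 x / (2 * √(g x)))) / √(g x) ^ 2) ^ 2 =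
      ∫ x in (0:ℝ)..1, (g2 x ^ 2 / g x - g1 x ^ 2 * g2 x / g x ^ 2
        + g1 x ^ 4 / g x ^ 3 / 4) := by
    refine integral_congr fun x _ => ?_
    have h1 := hsne x
    have h2 := hsq x
    generalize √(g x) = r at h1 h2
    rw [← h2]
    field_simp
    ring
  rw [e1, e2] at hW
  -- The second and third integrals on the right are those of the total derivatives
  -- `(g' g'' / g)'` and `(g'³ / g²)'`, so they vanish.
  have e3 : ∫ x in (0:ℝ)..1, (g1 x ^ 2 * g2 x / g x ^ 2 - 2 * g1 x * g3 x / g x) =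
      2 * (∫ x in (0:ℝ)..1, (g2 x ^ 2 / g x - g1 x ^ 2 * g2 x / g x ^ 2
        + g1 x ^ 4 / g x ^ 3 / 4))
      - 2 * (∫ x in (0:ℝ)..1, (g2 x ^ 2 / g x + g1 x * g3 x / g x - g1 x ^ 2 * g2 x / g x ^ 2))
      + 1 / 3 * (∫ x in (0:ℝ)..1, (3 * (g1 x ^ 2 * g2 x / g x ^ 2) - 2 * (g1 x ^ 4 / g x ^ 3)))
      + 1 / 6 * ∫ x in (0:ℝ)..1, g1 x ^ 4 / g x ^ 3 := by
    simp_rw [← intervalIntegral.integral_const_mul]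
    rw [← intervalIntegral.integral_sub, ← intervalIntegral.integral_add,
      ← intervalIntegral.integral_add]
    · refine integral_congr fun x _ => ?_
      ring
    all_goals exact Continuous.intervalIntegrable (by fun_prop) _ _
  rw [e3, hD1, hD2]
  linarith

/-- The integral is the time derivative of `∫ g log g - (8π²)⁻¹ ∫ g'²/g` along the heat flow;
the first two terms contribute `-∫ g'²/g` after an integration by parts. -/
theorem flow_deriv_nonneg {g g1 g2 g3 : ℝ → ℝ} (hg : ∀ x, HasDerivAt g (g1 x) x)
    (hg1 : ∀ x, HasDerivAt g1 (g2 x) x) (hg2 : ∀ x, HasDerivAt g2 (g3 x) x)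
    (hg3 : Continuous g3) (hpos : ∀ x, 0 < g x)
    (p0 : g 1 = g 0) (p1 : g1 1 = g1 0) (p2 : g2 1 = g2 0) :
    0 ≤ ∫ x in (0:ℝ)..1, (g2 x * log (g x) + g2 x +
      (g1 x ^ 2 * g2 x / g x ^ 2 - 2 * g1 x * g3 x / g x) / (8 * π ^ 2)) := by
  have hJ := fisher_dissipation hg hg1 hg2 hg3 hpos p0 p1 p2
  have c0 : Continuous g := continuous_iff_continuousAt.2 fun x => (hg x).continuousAt
  have c1 : Continuous g1 := continuous_iff_continuousAt.2 fun x => (hg1 x).continuousAt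
  have c2 : Continuous g2 := continuous_iff_continuousAt.2 fun x => (hg2 x).continuousAt
  have hne : ∀ x, g x ≠ 0 := fun x => (hpos x).ne'
  have cl : Continuous fun x => log (g x) := c0.log hne
  have cI : Continuous fun x => g1 x ^ 2 / g x := (c1.pow 2).div c0 hne
  have cJ : Continuous fun x => g1 x ^ 2 * g2 x / g x ^ 2 - 2 * g1 x * g3 x / g x :=
    (((c1.pow 2).mul c2).div (c0.pow 2) fun x => pow_ne_zero 2 (hne x)).sub
      (Continuous.div (by fun_prop) c0 hne)
  have hD := integral_deriv_eq_zero (u := fun x => g1 x * log (g x) + g1 x)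
    (u' := fun x => g2 x * log (g x) + g2 x + g1 x ^ 2 / g x)
    (fun x => (((hg1 x).fun_mul ((hg x).log (hne x))).fun_add (hg1 x)).congr_deriv (by
      have := hne x
      field_simp
      ring))
    (((c2.mul cl).add c2).add cI) (by simp only [p0, p1])
  have e : ∫ x in (0:ℝ)..1, (g2 x * log (g x) + g2 x +
      (g1 x ^ 2 * g2 x / g x ^ 2 - 2 * g1 x * g3 x / g x) / (8 * π ^ 2)) =
      (∫ x in (0:ℝ)..1, (g2 x * log (g x) + g2 x + g1 x ^ 2 / g x)) -
      (∫ x in (0:ℝ)..1, g1 x ^ 2 / g x) +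
      (∫ x in (0:ℝ)..1, (g1 x ^ 2 * g2 x / g x ^ 2 - 2 * g1 x * g3 x / g x)) / (8 * π ^ 2) := by
    rw [← intervalIntegral.integral_div, ← intervalIntegral.integral_sub,
      ← intervalIntegral.integral_add]
    · refine integral_congr fun x _ => ?_
      ring
    all_goals exact Continuous.intervalIntegrable (by fun_prop) _ _
  rw [e, hD, zero_sub, ← sub_eq_neg_add, sub_nonneg, le_div_iff₀ (by positivity)]
  linarith

/-- The `x`-derivatives of a heat-evolved trigonometric polynomial are again of this form, and `∂ₜ = ∂ₓ²`. -/
theorem trig_flow (s : Finset ℤ) (a b : ℤ → ℝ) : ∃ a1 b1 a2 b2 a3 b3 : ℤ → ℝ,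
    (∀ t x, HasDerivAt (trig s a b t) (trig s a1 b1 t x) x) ∧
    (∀ t x, HasDerivAt (trig s a1 b1 t) (trig s a2 b2 t x) x) ∧
    (∀ t x, HasDerivAt (trig s a2 b2 t) (trig s a3 b3 t x) x) ∧
    (∀ t x, HasDerivAt (fun t => trig s a b t x) (trig s a2 b2 t x) t) ∧
    (∀ t x, HasDerivAt (fun t => trig s a1 b1 t x) (trig s a3 b3 t x) t) :=
  ⟨_, _, _, _, _, _, trig_hasDerivAt_x s a b, trig_hasDerivAt_x s _ _, trig_hasDerivAt_x s _ _,
    trig_hasDerivAt_t s a b, trig_hasDerivAt_t s _ _⟩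

/-- As `t → ∞` only the zero frequency survives. -/
theorem trig_tendsto (s : Finset ℤ) (a b : ℤ → ℝ) (x : ℝ) :
    Filter.Tendsto (fun t => trig s a b t x) Filter.atTop
      (nhds (∑ k ∈ s, if k = 0 then a k else 0)) := by
  refine tendsto_finsetSum _ fun k _ => ?_
  split_ifs with hk
  · simp [hk]
  · have hc : (0:ℝ) < (2 * π * k) ^ 2 := by positivity
    have h : Filter.Tendsto (fun t : ℝ => exp (-((2 * π * k) ^ 2 * t))) Filter.atTop (nhds 0) :=
      tendsto_exp_neg_atTop_nhds_zero.comp (Filter.tendsto_id.const_mul_atTop hc)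
    simpa using h.mul_const (a k * cos (2 * π * k * x) + b k * sin (2 * π * k * x))

theorem trig_integral (s : Finset ℤ) (a b : ℤ → ℝ) :
    ∫ x in (0:ℝ)..1, trig s a b 0 x = ∑ k ∈ s, if k = 0 then a k else 0 := by
  unfold trig
  rw [intervalIntegral.integral_finsetSum]
  · refine Finset.sum_congr rfl fun k _ => ?_
    split_ifs with hk
    · simp [hk]
    · have hc : (2 * π * k) ≠ 0 := by positivity
      have h := integral_deriv_eq_zero
        (u := fun x => a k * sin (2 * π * k * x) / (2 * π * k)
          - b k * cos (2 * π * k * x) / (2 * π * k))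
        (u' := fun x => exp (-((2 * π * k) ^ 2 * 0)) *
          (a k * cos (2 * π * k * x) + b k * sin (2 * π * k * x))) (fun x => ?_) (by fun_prop) ?_
      · exact h
      · have h : HasDerivAt (fun x : ℝ => 2 * π * k * x) (2 * π * k) x := by
          simpa using (hasDerivAt_id x).const_mul (2 * π * (k:ℝ))
        refine (((h.sin.const_mul (a k)).div_const (2 * π * k)).fun_sub
          ((h.cos.const_mul (b k)).div_const (2 * π * k))).congr_deriv ?_
        simp only [mul_zero, neg_zero, exp_zero, one_mul]
        field_simp
        ring
      · have h1 := Real.cos_int_mul_two_pi k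
        have h2 := Real.sin_add_int_mul_two_pi 0 k
        rw [show 2 * π * (k:ℝ) * 1 = k * (2 * π) by ring, h1, ← zero_add ((k:ℝ) * (2 * π)), h2]
        simp
  · exact fun k _ => Continuous.intervalIntegrable (by fun_prop) _ _

/-- The inequality for a positive trigonometric polynomial: `∫ g log g - (8π²)⁻¹ ∫ g'²/g` increases
along the heat flow, and it is at most `∫ g log g`, which tends to `m log m` with `m = ∫ g`. -/
theorem trig_logSobolev {s : Finset ℤ} {a b : ℤ → ℝ} {d : ℝ} (hd : 0 < d)
    (h : ∀ x, d ≤ trig s a b 0 x) :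
    ∫ x in (0:ℝ)..1, (trig s a b 0 x * log (trig s a b 0 x) -
        deriv (trig s a b 0) x ^ 2 / trig s a b 0 x / (8 * π ^ 2)) ≤
      (∫ x in (0:ℝ)..1, trig s a b 0 x) * log (∫ x in (0:ℝ)..1, trig s a b 0 x) := by
  -- `a1, b1`, `a2, b2`, `a3, b3` are the coefficients of the first three `x`-derivatives.
  obtain ⟨a1, b1, a2, b2, a3, b3, h0, h1, h2, ht0, ht1⟩ := trig_flow s a b
  have hpos : ∀ t, 0 ≤ t → ∀ x, 0 < trig s a b t x :=
    fun t ht x => hd.trans_le (trig_lower_bound h ht x)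
  have cG : ∀ a b, Continuous (Function.uncurry (trig s a b)) := trig_continuous s
  have cGx : ∀ a b t, Continuous (trig s a b t) := fun a b t =>
    (cG a b).comp (f := fun x => (t, x)) (by fun_prop)
  have per : ∀ a b t, trig s a b t 1 = trig s a b t 0 := fun a b t => by
    simpa using trig_add_one s a b t 0
  set F : ℝ → ℝ := fun t => ∫ x in (0:ℝ)..1, (trig s a b t x * log (trig s a b t x) -
        trig s a1 b1 t x ^ 2 / trig s a b t x / (8 * π ^ 2)) with hF
  have hder : ∀ t > 0, HasDerivAt F (∫ x in (0:ℝ)..1, (trig s a2 b2 t x * log (trig s a b t x)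
      + trig s a2 b2 t x + (trig s a1 b1 t x ^ 2 * trig s a2 b2 t x / trig s a b t x ^ 2
        - 2 * trig s a1 b1 t x * trig s a3 b3 t x / trig s a b t x) / (8 * π ^ 2))) t := by
    intro t ht
    refine hasDerivAt_integral_param (F := fun t x => trig s a b t x * log (trig s a b t x) -
        trig s a1 b1 t x ^ 2 / trig s a b t x / (8 * π ^ 2)) (F' := fun t x =>
        trig s a2 b2 t x * log (trig s a b t x)
      + trig s a2 b2 t x + (trig s a1 b1 t x ^ 2 * trig s a2 b2 t x / trig s a b t x ^ 2
        - 2 * trig s a1 b1 t x * trig s a3 b3 t x / trig s a b t x) / (8 * π ^ 2)) ?_ ?_ ?_ ht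
    · intro t ht
      have hne : ∀ x, trig s a b t x ≠ 0 := fun x => (hpos t ht.le x).ne'
      have := cGx a b t
      have := cGx a1 b1 t
      fun_prop (disch := assumption)
    · intro t ht x
      have hne : trig s a b t x ≠ 0 := (hpos t ht.le x).ne'
      refine (((ht0 t x).fun_mul ((ht0 t x).log hne)).fun_sub
        ((((ht1 t x).fun_pow 2).fun_div (ht0 t x) hne).div_const (8 * π ^ 2))).congr_deriv ?_
      field_simp
      push_cast
      ring
    · have hne : ∀ p ∈ Set.Ioi (0:ℝ) ×ˢ (Set.univ : Set ℝ), Function.uncurry (trig s a b) p ≠ 0 :=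
        fun p hp => (hpos p.1 (le_of_lt hp.1) p.2).ne'
      have d0 := (cG a b).continuousOn (s := Set.Ioi (0:ℝ) ×ˢ (Set.univ : Set ℝ))
      have d1 := (cG a1 b1).continuousOn (s := Set.Ioi (0:ℝ) ×ˢ (Set.univ : Set ℝ))
      have d2 := (cG a2 b2).continuousOn (s := Set.Ioi (0:ℝ) ×ˢ (Set.univ : Set ℝ))
      have d3 := (cG a3 b3).continuousOn (s := Set.Ioi (0:ℝ) ×ˢ (Set.univ : Set ℝ))
      exact ((d2.mul (d0.log hne)).add d2).add (((((d1.pow 2).mul d2).div (d0.pow 2)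
        fun p hp => pow_ne_zero 2 (hne p hp)).sub
          (((continuousOn_const.mul d1).mul d3).div d0 hne)).div_const _)
  have hcont : ContinuousOn F (Set.Ici 0) := by
    -- The flow need not stay positive for `t < 0`, so the time is truncated at `0`.
    have : Continuous fun t => F (max t 0) := by
      refine intervalIntegral.continuous_parametric_intervalIntegral_of_continuous'
        (f := fun t x => trig s a b (max t 0) x * log (trig s a b (max t 0) x) -
        trig s a1 b1 (max t 0) x ^ 2 / trig s a b (max t 0) x / (8 * π ^ 2)) ?_ 0 1
      have hne : ∀ p : ℝ × ℝ, trig s a b (max p.1 0) p.2 ≠ 0 :=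
        fun p => (hpos _ (le_max_right _ _) p.2).ne'
      have d0 : Continuous fun p : ℝ × ℝ => trig s a b (max p.1 0) p.2 :=
        (cG a b).comp (f := fun p : ℝ × ℝ => (max p.1 0, p.2)) (by fun_prop)
      have d1 : Continuous fun p : ℝ × ℝ => trig s a1 b1 (max p.1 0) p.2 :=
        (cG a1 b1).comp (f := fun p : ℝ × ℝ => (max p.1 0, p.2)) (by fun_prop)
      exact (d0.mul (d0.log hne)).sub (((d1.pow 2).div d0 hne).div_const _)
    refine this.continuousOn.congr fun t ht => ?_
    simp only [max_eq_left (Set.mem_Ici.1 ht)]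
  have hmono : MonotoneOn F (Set.Ici 0) := by
    refine monotoneOn_of_deriv_nonneg (convex_Ici 0) hcont ?_ ?_ <;> rw [interior_Ici]
    · exact fun t ht => (hder t ht).differentiableAt.differentiableWithinAt
    · intro t ht
      rw [(hder t ht).deriv]
      exact flow_deriv_nonneg (h0 t) (h1 t) (h2 t) (cGx _ _ _) (hpos t (le_of_lt ht))
        (per _ _ _) (per _ _ _) (per _ _ _)
  have hlim : Filter.Tendsto (fun t => ∫ x in (0:ℝ)..1, trig s a b t x * log (trig s a b t x))
      Filter.atTop (nhds ((∫ x in (0:ℝ)..1, trig s a b 0 x) *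
        log (∫ x in (0:ℝ)..1, trig s a b 0 x))) := by
    obtain ⟨C, hC⟩ := (isCompact_Icc (a := -∑ k ∈ s, (|a k| + |b k|))
      (b := ∑ k ∈ s, (|a k| + |b k|))).exists_bound_of_continuousOn
      (Real.continuous_mul_log.continuousOn)
    rw [trig_integral]
    have := intervalIntegral.tendsto_integral_filter_of_dominated_convergence
      (μ := volume) (a := 0) (b := 1) (l := Filter.atTop)
      (F := fun t x => trig s a b t x * log (trig s a b t x))
      (f := fun _ => (∑ k ∈ s, if k = 0 then a k else 0) *
        log (∑ k ∈ s, if k = 0 then a k else 0)) (fun _ => C) ?_ ?_ (by simp) ?_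
    · simpa using this
    · exact Filter.Eventually.of_forall fun t =>
        (Real.continuous_mul_log.comp (cGx a b t)).aestronglyMeasurable
    · filter_upwards [Filter.eventually_ge_atTop 0] with t ht
      exact Filter.Eventually.of_forall fun x _ => hC _ (abs_le.1 (trig_bound s a b ht x))
    · exact Filter.Eventually.of_forall fun x _ =>
        (Real.continuous_mul_log.tendsto _).comp (trig_tendsto s a b x)
  have hderiv : ∀ x, deriv (trig s a b 0) x = trig s a1 b1 0 x := fun x => (h0 0 x).deriv
  simp_rw [hderiv]
  refine ge_of_tendsto hlim ?_
  filter_upwards [Filter.eventually_ge_atTop 0] with t ht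
  refine (hmono (Set.mem_Ici.2 le_rfl) ht ht).trans ?_
  have hne : ∀ x, trig s a b t x ≠ 0 := fun x => (hpos t ht x).ne'
  have := cGx a b t
  have := cGx a1 b1 t
  refine integral_mono_on zero_le_one ?_ ?_ fun x _ => ?_
  · exact Continuous.intervalIntegrable (by fun_prop (disch := assumption)) _ _
  · exact Continuous.intervalIntegrable (by fun_prop (disch := assumption)) _ _
  · have := hpos t ht x
    have : 0 ≤ trig s a1 b1 t x ^ 2 / trig s a b t x / (8 * π ^ 2) := by positivity
    linarith

/-! ### Approximation by trigonometric polynomials -/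

/-- Periodic `C¹` functions are uniform `C¹`-limits of trigonometric polynomials: approximate `g'` by
Stone-Weierstrass, discard the (small) constant term and integrate. -/
theorem exists_trig_approx {g : ℝ → ℝ} (hg : ContDiff ℝ 1 g) (hper : Function.Periodic g 1)
    {η : ℝ} (hη : 0 < η) : ∃ (s : Finset ℤ) (a b : ℤ → ℝ), ∀ x,
      |trig s a b 0 x - g x| ≤ η ∧ |deriv (trig s a b 0) x - deriv g x| ≤ η := by
  have hgd : ∀ x, HasDerivAt g (deriv g x) x :=
    fun x => (hg.differentiable one_ne_zero x).hasDerivAt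
  have hgc : Continuous (deriv g) := hg.continuous_deriv le_rfl
  have hgper : Function.Periodic (deriv g) 1 := fun x => by
    rw [← deriv_comp_add_const]
    congr 1
    exact funext hper
  have hφper : Function.Periodic (fun x : ℝ => ((deriv g x : ℝ) : ℂ)) (1:ℝ) := fun x => by simp only [hgper x]
  let φ : C(AddCircle (1:ℝ), ℂ) := ⟨hφper.lift,
    continuous_coinduced_dom.2 (Complex.continuous_ofReal.comp hgc)⟩
  have : Fact ((0:ℝ) < 1) := ⟨zero_lt_one⟩
  have hmem : φ ∈ (Submodule.span ℂ (Set.range (@fourier 1))).topologicalClosure := by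
    rw [span_fourier_closure_eq_top]
    trivial
  obtain ⟨p, hp, hdist⟩ := Metric.mem_closure_iff.1 hmem (η / 2) (half_pos hη)
  obtain ⟨c, rfl⟩ := Finsupp.mem_span_range_iff_exists_finsupp.1 hp
  set s := insert 0 c.support with hs
  have hre : ∀ x : ℝ, trig s (fun k => (c k).re) (fun k => -(c k).im) 0 x =
      ((c.sum fun i a => a • (fourier i : C(AddCircle (1:ℝ), ℂ))) (x : AddCircle (1:ℝ))).re := by
    intro x
    rw [Finsupp.sum_of_support_subset c (s := s) (Finset.subset_insert _ _) _ (by simp)]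
    rw [ContinuousMap.sum_apply, Complex.re_sum]
    refine Finset.sum_congr rfl fun k _ => ?_
    have e : 2 * (π:ℂ) * Complex.I * k * x / ((1:ℝ):ℂ) = ((2 * π * k * x : ℝ) : ℂ) * Complex.I := by
      push_cast
      ring
    simp only [ContinuousMap.smul_apply, fourier_coe_apply, e, smul_eq_mul, Complex.mul_re,
      Complex.exp_ofReal_mul_I_re, Complex.exp_ofReal_mul_I_im]
    simp
    ring
  have hclose : ∀ x, |trig s (fun k => (c k).re) (fun k => -(c k).im) 0 x - deriv g x| ≤ η / 2 := by
    intro x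
    rw [hre]
    have h1 := (ContinuousMap.dist_apply_le_dist (x : AddCircle (1:ℝ))).trans hdist.le
    have h2 : φ (x : AddCircle (1:ℝ)) = ((deriv g x : ℝ) : ℂ) := rfl
    rw [h2, dist_comm, dist_eq_norm] at h1
    refine le_trans ?_ h1
    refine le_trans (le_of_eq ?_) (Complex.abs_re_le_norm _)
    simp
  have hmean : |∑ k ∈ s, if k = 0 then (c k).re else 0| ≤ η / 2 := by
    rw [← trig_integral s (fun k => (c k).re) (fun k => -(c k).im)]
    have hz := integral_deriv_eq_zero hgd hgc (by simpa using hper 0)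
    have cT : Continuous (trig s (fun k => (c k).re) (fun k => -(c k).im) 0) :=
      (trig_continuous s _ _).comp (f := fun x => ((0:ℝ), x)) (by fun_prop)
    have hsub := intervalIntegral.integral_sub (cT.intervalIntegrable 0 1)
      (hgc.intervalIntegrable (μ := volume) 0 1)
    rw [hz, sub_zero] at hsub
    rw [← hsub]
    simpa using norm_integral_le_of_norm_le_const (a := (0:ℝ)) (b := 1)
      (f := fun x => trig s (fun k => (c k).re) (fun k => -(c k).im) 0 x - deriv g x)
      (C := η / 2) fun x _ => hclose x
  -- `A` is the constant of integration, chosen so that the antiderivative agrees with `g` at `0`.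
  -- For `k = 0` the quotients below are `0` by the convention `x / 0 = 0`.
  set A := g 0 - ∑ k ∈ s, (c k).im / (2 * π * k) with hA
  set a : ℤ → ℝ := fun k => (c k).im / (2 * π * k) + if k = 0 then A else 0 with ha
  set b : ℤ → ℝ := fun k => (c k).re / (2 * π * k) with hb
  have hder := trig_hasDerivAt_x s a b 0
  have hsplit : ∀ x, trig s (fun k => (c k).re) (fun k => -(c k).im) 0 x =
      deriv (trig s a b 0) x + ∑ k ∈ s, if k = 0 then (c k).re else 0 := by
    intro x
    rw [(hder x).deriv]
    unfold trig
    rw [← Finset.sum_add_distrib]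
    refine Finset.sum_congr rfl fun k _ => ?_
    by_cases hk : k = 0
    · simp [hk]
    · have : (2 * π * k) ≠ 0 := by positivity
      simp only [ha, hb, hk, if_false, add_zero]
      rw [mul_div_cancel₀ _ this, mul_div_cancel₀ _ this]
  have hd : ∀ x, |deriv (trig s a b 0) x - deriv g x| ≤ η := by
    intro x
    have h1 := abs_le.1 (hclose x)
    have h2 := abs_le.1 hmean
    rw [hsplit] at h1
    exact abs_le.2 ⟨by linarith, by linarith⟩
  have h00 : trig s a b 0 0 = g 0 := by
    have : ∑ k ∈ s, (if k = 0 then A else 0) = A := by simp [hs]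
    simp only [trig, ha, mul_zero, neg_zero, exp_zero, cos_zero, sin_zero, mul_one, add_zero,
      one_mul, Finset.sum_add_distrib, this]
    rw [hA]
    ring
  refine ⟨s, a, b, fun x => ⟨?_, hd x⟩⟩
  have hDper : Function.Periodic (fun x => trig s a b 0 x - g x) 1 := fun x => by
    simp only [trig_add_one, hper x]
  obtain ⟨y, hy, hxy⟩ := hDper.exists_mem_Ico₀ zero_lt_one x
  rw [hxy]
  have := convex_univ.norm_image_sub_le_of_norm_hasDerivWithin_le
    (f := fun x => trig s a b 0 x - g x)
    (f' := fun x => deriv (trig s a b 0) x - deriv g x) (C := η)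
    (fun x _ => (((hder x).differentiableAt.hasDerivAt).fun_sub (hgd x)).hasDerivWithinAt)
    (fun x _ => hd x) (Set.mem_univ 0) (Set.mem_univ y)
  rw [h00, sub_self, sub_zero, sub_zero, Real.norm_eq_abs, Real.norm_eq_abs,
    abs_of_nonneg hy.1] at this
  exact this.trans (mul_le_of_le_one_right hη.le hy.2.le)

/-- Passage to the limit in `∫ Φ(g, g')` under uniform convergence of `g ≥ d > 0` and `g'`. The rate
`d / 2 / (n + 1)` keeps the approximants above `d / 2`, hence in a compact part of the domain of `Φ`. -/
theorem tendsto_integral_of_approx {P P' : ℕ → ℝ → ℝ} {g g' : ℝ → ℝ} {d : ℝ} (hd : 0 < d)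
    (cP : ∀ n, Continuous (P n)) (cP' : ∀ n, Continuous (P' n))
    (cg : Continuous g) (cg' : Continuous g') (hgd : ∀ x, d ≤ g x)
    (h : ∀ n x, |P n x - g x| ≤ d / 2 / (n + 1)) (h' : ∀ n x, |P' n x - g' x| ≤ d / 2 / (n + 1))
    {Φ : ℝ × ℝ → ℝ} (hΦ : ContinuousOn Φ {p | 0 < p.1}) :
    Filter.Tendsto (fun n => ∫ x in (0:ℝ)..1, Φ (P n x, P' n x)) Filter.atTop
      (nhds (∫ x in (0:ℝ)..1, Φ (g x, g' x))) := by
  have hle : ∀ n : ℕ, d / 2 / (n + 1) ≤ d / 2 := fun n =>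
    div_le_self (by positivity) (by have := n.cast_nonneg (α := ℝ); linarith)
  have hlow : ∀ n x, d / 2 ≤ P n x := fun n x => by
    have h1 := (abs_le.1 (h n x)).1
    have h2 := hle n
    have h3 := hgd x
    linarith
  have hz : Filter.Tendsto (fun n : ℕ => d / 2 / ((n:ℝ) + 1)) Filter.atTop (nhds 0) :=
    tendsto_const_nhds.div_atTop
      (Filter.tendsto_atTop_add_const_right _ _ tendsto_natCast_atTop_atTop)
  obtain ⟨M, hM⟩ := (isCompact_Icc (a := (0:ℝ)) (b := 1)).exists_bound_of_continuousOn
    cg.continuousOn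
  obtain ⟨M', hM'⟩ := (isCompact_Icc (a := (0:ℝ)) (b := 1)).exists_bound_of_continuousOn
    cg'.continuousOn
  obtain ⟨C, hC⟩ := (isCompact_Icc.prod isCompact_Icc : IsCompact
    (Set.Icc (d/2) (M + d/2) ×ˢ Set.Icc (-(M' + d/2)) (M' + d/2))).exists_bound_of_continuousOn
    (hΦ.mono fun p hp => lt_of_lt_of_le (half_pos hd) hp.1.1)
  refine intervalIntegral.tendsto_integral_filter_of_dominated_convergence (fun _ => C)
    (Filter.Eventually.of_forall fun n => ?_) (Filter.Eventually.of_forall fun n =>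
      Filter.Eventually.of_forall fun x hx => ?_) (by simp)
    (Filter.Eventually.of_forall fun x _ => ?_)
  · exact (hΦ.comp_continuous ((cP n).prodMk (cP' n))
      fun x => lt_of_lt_of_le (half_pos hd) (hlow n x)).aestronglyMeasurable
  · rw [Set.uIoc_of_le zero_le_one] at hx
    have hx' : x ∈ Set.Icc (0:ℝ) 1 := ⟨hx.1.le, hx.2⟩
    have h1 := abs_le.1 (h n x)
    have h2 := abs_le.1 (h' n x)
    have h3 := hle n
    have h4 := abs_le.1 (hM x hx')
    have h5 := abs_le.1 (hM' x hx')
    exact hC _ ⟨⟨hlow n x, by simp only; linarith⟩, ⟨by simp only; linarith, by simp only; linarith⟩⟩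
  · have t1 : Filter.Tendsto (fun n => P n x) Filter.atTop (nhds (g x)) :=
      tendsto_iff_norm_sub_tendsto_zero.2
        (squeeze_zero (fun _ => norm_nonneg _) (fun n => h n x) hz)
    have t2 : Filter.Tendsto (fun n => P' n x) Filter.atTop (nhds (g' x)) :=
      tendsto_iff_norm_sub_tendsto_zero.2
        (squeeze_zero (fun _ => norm_nonneg _) (fun n => h' n x) hz)
    have hopen : {p : ℝ × ℝ | 0 < p.1} ∈ nhds (g x, g' x) :=
      (isOpen_lt continuous_const continuous_fst).mem_nhds (hd.trans_le (hgd x))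
    exact (hΦ.continuousAt hopen).tendsto.comp (t1.prodMk_nhds t2)

/-! ### From positive densities to the general case -/

/-- The inequality in terms of the density `g = f²`, for `g` bounded away from zero and without
normalisation. -/
theorem logSobolev_of_pos {g : ℝ → ℝ} (hg : ContDiff ℝ 1 g) (hper : Function.Periodic g 1)
    {d : ℝ} (hd : 0 < d) (hgd : ∀ x, d ≤ g x) :
    ∫ x in (0:ℝ)..1, (g x * log (g x) - deriv g x ^ 2 / g x / (8 * π ^ 2)) ≤
      (∫ x in (0:ℝ)..1, g x) * log (∫ x in (0:ℝ)..1, g x) := by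
  choose s a b h using fun n : ℕ => exists_trig_approx hg hper
    (η := d / 2 / ((n:ℝ) + 1)) (by positivity)
  have hgc' : Continuous (deriv g) := hg.continuous_deriv le_rfl
  have cP : ∀ n, Continuous (trig (s n) (a n) (b n) 0) := fun n =>
    (trig_continuous _ _ _).comp (f := fun x => ((0:ℝ), x)) (by fun_prop)
  have cP' : ∀ n, Continuous (deriv (trig (s n) (a n) (b n) 0)) := fun n => by
    rw [funext fun x => (trig_hasDerivAt_x (s n) (a n) (b n) 0 x).deriv]
    exact (trig_continuous _ _ _).comp (f := fun x => ((0:ℝ), x)) (by fun_prop)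
  have key := fun Φ => tendsto_integral_of_approx hd cP cP' hg.continuous hgc' hgd
    (fun n x => (h n x).1) (fun n x => (h n x).2) (Φ := Φ)
  have k1 := key (fun p => p.1 * log p.1 - p.2 ^ 2 / p.1 / (8 * π ^ 2)) (by
    have hne : ∀ p ∈ {p : ℝ × ℝ | 0 < p.1}, p.1 ≠ 0 := fun p hp => ne_of_gt hp
    exact (continuousOn_fst.mul (continuousOn_fst.log hne)).sub
      (((continuousOn_snd.pow 2).div continuousOn_fst hne).div_const _))
  have k2 := key (fun p => p.1) continuousOn_fst
  refine le_of_tendsto_of_tendsto' k1 ((Real.continuous_mul_log.tendsto _).comp k2) fun n => ?_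
  refine trig_logSobolev (half_pos hd) fun x => ?_
  have h1 := (abs_le.1 (h n x).1).1
  have h2 : d / 2 / ((n:ℝ) + 1) ≤ d / 2 :=
    div_le_self (by positivity) (by have := n.cast_nonneg (α := ℝ); linarith)
  have h3 := hgd x
  linarith

/-- Sharp log-Sobolev inequality on the circle of length 1 (Weissler 1980):
for a non-negative `C¹` 1-periodic function `f` with `∫₀¹ f² = 1`,
`4π² ∫₀¹ f² log f ≤ ∫₀¹ f'²`. (Note `Real.log 0 = 0`, giving the convention
`0² log 0 = 0`.) -/
theorem logSobolev_circle (f : ℝ → ℝ)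
    (hf : ContDiff ℝ 1 f) (hper : Function.Periodic f 1)
    (hpos : ∀ x, 0 ≤ f x)
    (hnorm : ∫ x in (0:ℝ)..1, (f x) ^ 2 = 1) :
    4 * π ^ 2 * ∫ x in (0:ℝ)..1, (f x) ^ 2 * Real.log (f x) ≤
      ∫ x in (0:ℝ)..1, (deriv f x) ^ 2 := by
  have cf := hf.continuous
  have cf' : Continuous (deriv f) := hf.continuous_deriv le_rfl
  have cml : Continuous fun y : ℝ => y ^ 2 * log y := by
    have : (fun y : ℝ => y ^ 2 * log y) = fun y => y * (y * log y) := by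
      ext y
      ring
    rw [this]
    exact continuous_id.mul Real.continuous_mul_log
  -- Apply the positive case to the density `(f + ε)²`, whose Fisher information is `4 ∫ f'²`.
  have hstep : ∀ ε > 0, ∫ x in (0:ℝ)..1,
      (2 * ((f x + ε) ^ 2 * log (f x + ε)) - deriv f x ^ 2 / (2 * π ^ 2)) ≤
      (∫ x in (0:ℝ)..1, (f x + ε) ^ 2) * log (∫ x in (0:ℝ)..1, (f x + ε) ^ 2) := by
    intro ε hε
    have h := logSobolev_of_pos (g := fun x => (f x + ε) ^ 2) (by fun_prop)
      (fun x => by simp only [hper x]) (pow_pos hε 2)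
      (fun x => pow_le_pow_left₀ hε.le (by linarith [hpos x]) 2)
    refine le_trans (le_of_eq (integral_congr fun x _ => ?_)) h
    have hd : deriv (fun x => (f x + ε) ^ 2) x = 2 * (f x + ε) * deriv f x := by
      have := (((hf.differentiable one_ne_zero x).hasDerivAt.add_const ε).fun_pow 2).deriv
      rw [this]
      push_cast
      ring
    have hne : f x + ε ≠ 0 := by linarith [hpos x]
    simp only [hd, log_pow]
    push_cast
    field_simp
    ring
  have c1 : Continuous fun ε : ℝ => ∫ x in (0:ℝ)..1,
      (2 * ((f x + ε) ^ 2 * log (f x + ε)) - deriv f x ^ 2 / (2 * π ^ 2)) := by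
    refine intervalIntegral.continuous_parametric_intervalIntegral_of_continuous'
      (f := fun ε x => 2 * ((f x + ε) ^ 2 * log (f x + ε)) - deriv f x ^ 2 / (2 * π ^ 2)) ?_ 0 1
    exact (continuous_const.mul (cml.comp
      (by fun_prop : Continuous fun p : ℝ × ℝ => f p.2 + p.1))).sub (by fun_prop)
  have c2 : Continuous fun ε : ℝ => (∫ x in (0:ℝ)..1, (f x + ε) ^ 2) *
      log (∫ x in (0:ℝ)..1, (f x + ε) ^ 2) := by
    refine Real.continuous_mul_log.comp
      (intervalIntegral.continuous_parametric_intervalIntegral_of_continuous'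
        (f := fun ε x => (f x + ε) ^ 2) ?_ 0 1)
    unfold Function.uncurry
    fun_prop
  have h0 := le_of_tendsto_of_tendsto ((c1.tendsto 0).mono_left nhdsWithin_le_nhds)
    ((c2.tendsto 0).mono_left nhdsWithin_le_nhds)
    (Filter.mem_of_superset (self_mem_nhdsWithin (s := Set.Ioi (0:ℝ))) hstep)
  simp only [add_zero, hnorm, log_one, mul_zero] at h0
  have cfl : Continuous fun x => f x ^ 2 * log (f x) := cml.comp cf
  rw [intervalIntegral.integral_sub
    ((by fun_prop : Continuous fun x => 2 * (f x ^ 2 * log (f x))).intervalIntegrable _ _)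
    ((by fun_prop : Continuous fun x => deriv f x ^ 2 / (2 * π ^ 2)).intervalIntegrable _ _),
    intervalIntegral.integral_const_mul, intervalIntegral.integral_div, sub_nonpos,
    le_div_iff₀ (by positivity)] at h0
  linarith
end

section
/- Let f be a non-negative C¹ function on the interval [0,1] satisfying ∫₀¹ f(x)² dx = 1. Then π² ∫₀¹ f(x)² log f(x) dx ≤ ∫₀¹ f'(x)² dx. -/
open Real MeasureTheory intervalIntegral

/-!
The proof is a calibration argument. Put `q y = 2 y² log y - y² + 1`, the entropy density
of `y²` relative to `1`; it decreases on `[0,1]` and increases on `[1,∞)`, with `q 1 = 0`.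

Let `m < M` be the extreme values of `f`. After dividing `f` by a suitable constant `r`
(the square root of the identric mean of `m²` and `M²`), the new extreme values, still called
`m` and `M`, satisfy `q m = q M`; call the common value `2a²`. Then `q ≤ 2a²` on `[m, M]`, and
with `k = √(2a² - q)` the pointwise bound `2 κ k(g) |g'| ≤ g'² + κ² k(g)²`, `κ² = π²/2`,
integrates to
`2κ ∫_m^M k ≤ ∫ g'² + κ² (2a² - ∫ q(g))`,
because `g` must travel from `m` to `M`. So `κ² ∫ q(g) ≤ ∫ g'²` as soon as
`∫_m^M k ≥ π a² / √2`.

This last bound says that the potential well of `q` is at least as wide as that of the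
parabola `2 v²`: the substitution `y = 1 + v - v²/6`, for which `q y ≤ 2 v²` (`q_le`), maps
`[-a, a]` into `[m, M]` and has Jacobian `1 - v/3`, whose odd part does not contribute, so
`∫_m^M k ≥ ∫_{-a}^a √(2a² - 2v²) dv = π a² / √2`.

Undoing the scaling costs only `2 log r ≤ r² - 1`.
-/

namespace LogSobolev

/-! ### The entropy density -/

/-- The entropy density `y² log y² - y² + 1` of `y²` relative to `1`. -/
noncomputable def q (y : ℝ) : ℝ := 2 * y ^ 2 * Real.log y - y ^ 2 + 1

lemma continuous_sq_mul_log : Continuous fun y : ℝ => y ^ 2 * Real.log y := by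
  have h : Continuous fun y : ℝ => y * (y * Real.log y) :=
    continuous_id.mul Real.continuous_mul_log
  convert h using 2 with y
  ring

lemma continuous_q : Continuous q := by
  have h : Continuous fun y : ℝ => 2 * (y ^ 2 * Real.log y) - y ^ 2 + 1 :=
    ((continuous_sq_mul_log.const_mul 2).sub (continuous_pow 2)).add continuous_const
  convert h using 2 with y
  simp only [q]
  ring

lemma hasDerivAt_q {y : ℝ} (hy : y ≠ 0) : HasDerivAt q (4 * y * Real.log y) y := by
  have h := (((((hasDerivAt_id y).pow 2).const_mul 2).mul (Real.hasDerivAt_log hy)).sub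
    ((hasDerivAt_id y).pow 2)).add_const 1
  refine h.congr_deriv ?_
  simp
  field_simp
  ring

lemma strictAntiOn_q : StrictAntiOn q (Set.Icc 0 1) := by
  apply strictAntiOn_of_deriv_neg (convex_Icc 0 1) continuous_q.continuousOn
  intro x hx
  rw [interior_Icc] at hx
  rw [(hasDerivAt_q hx.1.ne').deriv]
  have := Real.log_neg hx.1 hx.2
  nlinarith [hx.1, mul_pos hx.1 (neg_pos.2 this)]

lemma strictMonoOn_q : StrictMonoOn q (Set.Ici 1) := by
  apply strictMonoOn_of_deriv_pos (convex_Ici 1) continuous_q.continuousOn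
  intro x hx
  rw [interior_Ici] at hx
  have hx : 1 < x := hx
  rw [(hasDerivAt_q (by linarith)).deriv]
  have := Real.log_pos hx
  positivity

/-! ### Width of the sublevel sets -/

lemma Y_pos {v : ℝ} (h1 : -(3 / 4) ≤ v) (h2 : v ≤ 3 / 4) : 0 < 1 + v - v ^ 2 / 6 := by
  nlinarith

/-- The sign of `v / ((1 + v - v²/6) (1 - v/3)) - log (1 + v - v²/6)` is that of `v`: it vanishes
at `0` and is monotone. -/
lemma monotoneOn_H : MonotoneOn
    (fun v : ℝ => v / ((1 + v - v ^ 2 / 6) * (1 - v / 3)) - Real.log (1 + v - v ^ 2 / 6))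
    (Set.Icc (-(3 / 4)) (3 / 4)) := by
  have key : ∀ v ∈ Set.Icc (-(3 / 4) : ℝ) (3 / 4), HasDerivAt
      (fun v : ℝ => v / ((1 + v - v ^ 2 / 6) * (1 - v / 3)) - Real.log (1 + v - v ^ 2 / 6))
      (((1 + v ^ 2 / 2 - v ^ 3 / 9) - (1 + v - v ^ 2 / 6) * (1 - v / 3) ^ 3) /
        ((1 + v - v ^ 2 / 6) * (1 - v / 3)) ^ 2) v := by
    intro v hv
    have hY := Y_pos hv.1 hv.2
    have hZ : 0 < 1 - v / 3 := by linarith [hv.2]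
    have dY : HasDerivAt (fun v : ℝ => 1 + v - v ^ 2 / 6) (1 - v / 3) v := by
      have h := ((hasDerivAt_id v).const_add 1).sub (((hasDerivAt_id v).pow 2).div_const 6)
      refine h.congr_deriv ?_
      simp
      ring
    have dZ : HasDerivAt (fun v : ℝ => 1 - v / 3) (-(1 / 3)) v :=
      ((hasDerivAt_id v).div_const 3).const_sub 1
    have h := ((hasDerivAt_id v).div (dY.mul dZ) (mul_pos hY hZ).ne').sub (dY.log hY.ne')
    refine h.congr_deriv ?_
    simp only [id, Pi.mul_apply]
    rw [div_sub_div _ _ (by positivity) hY.ne', div_eq_div_iff (by positivity) (by positivity)]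
    ring
  apply monotoneOn_of_deriv_nonneg (convex_Icc _ _)
  · exact fun v hv => (key v hv).continuousAt.continuousWithinAt
  · exact fun v hv => (key v (interior_subset hv)).differentiableAt.differentiableWithinAt
  · intro v hv
    have hv := interior_subset hv
    rw [(key v hv).deriv]
    apply div_nonneg _ (sq_nonneg _)
    obtain ⟨h1, h2⟩ := hv
    have e : (1 + v ^ 2 / 2 - v ^ 3 / 9) - (1 + v - v ^ 2 / 6) * (1 - v / 3) ^ 3
        = v ^ 2 * (4 / 3 - 31 / 54 * v + (5 / 54) * v ^ 2 - v ^ 3 / 162) := by ring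
    rw [e]
    apply mul_nonneg (sq_nonneg _)
    nlinarith [mul_nonneg (sq_nonneg v) (sub_nonneg.2 h2), sq_nonneg v]

/-- The polynomial `1 + v - v²/6` is the second-order expansion at `v = 0` of the increasing
solution `y` of `q y = 2 v²` with `y = 1` at `v = 0`, and it lies inside the corresponding sublevel set of `q`. -/
lemma q_le {v : ℝ} (h1 : -(3 / 4) ≤ v) (h2 : v ≤ 3 / 4) :
    q (1 + v - v ^ 2 / 6) ≤ 2 * v ^ 2 := by
  set F : ℝ → ℝ := fun v => 2 * v ^ 2 - q (1 + v - v ^ 2 / 6) with hF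
  have key : ∀ v ∈ Set.Icc (-(3 / 4) : ℝ) (3 / 4), HasDerivAt F
      (4 * ((1 + v - v ^ 2 / 6) * (1 - v / 3)) *
        (v / ((1 + v - v ^ 2 / 6) * (1 - v / 3)) - Real.log (1 + v - v ^ 2 / 6))) v := by
    intro v hv
    have hY := Y_pos hv.1 hv.2
    have hZ : 0 < 1 - v / 3 := by linarith [hv.2]
    have dY : HasDerivAt (fun v : ℝ => 1 + v - v ^ 2 / 6) (1 - v / 3) v := by
      have h := ((hasDerivAt_id v).const_add 1).sub (((hasDerivAt_id v).pow 2).div_const 6)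
      refine h.congr_deriv ?_
      simp
      ring
    have h := (((hasDerivAt_id v).pow 2).const_mul 2).sub
      (HasDerivAt.comp v (hasDerivAt_q hY.ne') dY)
    refine h.congr_deriv ?_
    have e' : (1 + v - v ^ 2 / 6) * (1 - v / 3) *
        (v / ((1 + v - v ^ 2 / 6) * (1 - v / 3))) = v := mul_div_cancel₀ v (mul_pos hY hZ).ne'
    simp only [id, pow_one, Nat.cast_ofNat, Nat.add_one_sub_one]
    linear_combination (-4) * e'
  have F0 : F 0 = 0 := by simp [hF, q]
  suffices 0 ≤ F v by simpa [hF] using this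
  rcases le_total 0 v with hv | hv
  · have : MonotoneOn F (Set.Icc 0 (3 / 4)) := by
      apply monotoneOn_of_deriv_nonneg (convex_Icc _ _)
      · exact fun v hv => (key v ⟨by linarith [hv.1], hv.2⟩).continuousAt.continuousWithinAt
      · intro v hv
        have hv := interior_subset hv
        exact (key v ⟨by linarith [hv.1], hv.2⟩).differentiableAt.differentiableWithinAt
      · intro v hv
        have hv := interior_subset hv
        have hv' : v ∈ Set.Icc (-(3 / 4) : ℝ) (3 / 4) := ⟨by linarith [hv.1], hv.2⟩
        rw [(key v hv').deriv]
        have hY := Y_pos hv'.1 hv'.2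
        have hZ : 0 < 1 - v / 3 := by linarith [hv.2]
        have := monotoneOn_H (by norm_num : (0 : ℝ) ∈ _) hv' hv.1
        simp only [zero_div, ne_eq, OfNat.ofNat_ne_zero, not_false_eq_true, zero_pow, add_zero,
          sub_zero, Real.log_one, mul_one] at this
        positivity
    have := this (by norm_num : (0 : ℝ) ∈ _) ⟨hv, h2⟩ hv
    rwa [F0] at this
  · have : AntitoneOn F (Set.Icc (-(3 / 4)) 0) := by
      apply antitoneOn_of_deriv_nonpos (convex_Icc _ _)
      · exact fun v hv => (key v ⟨hv.1, by linarith [hv.2]⟩).continuousAt.continuousWithinAt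
      · intro v hv
        have hv := interior_subset hv
        exact (key v ⟨hv.1, by linarith [hv.2]⟩).differentiableAt.differentiableWithinAt
      · intro v hv
        have hv := interior_subset hv
        have hv' : v ∈ Set.Icc (-(3 / 4) : ℝ) (3 / 4) := ⟨hv.1, by linarith [hv.2]⟩
        rw [(key v hv').deriv]
        have hY := Y_pos hv'.1 hv'.2
        have hZ : 0 < 1 - v / 3 := by linarith [hv.2]
        have := monotoneOn_H hv' (by norm_num : (0 : ℝ) ∈ _) hv.2
        simp only [zero_div, ne_eq, OfNat.ofNat_ne_zero, not_false_eq_true, zero_pow, add_zero,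
          sub_zero, Real.log_one, mul_one] at this
        exact mul_nonpos_of_nonneg_of_nonpos (by positivity) this
    have := this ⟨h1, hv⟩ (by norm_num : (0 : ℝ) ∈ _) hv
    rwa [F0] at this

/-! ### The calibration -/

/-- The bound `∫_m^M √(2a² - q) ≥ ∫_{-a}^a √(2a² - 2v²) dv = π a² / √2` for the potential
well of `q`. -/
lemma well_bound {m M a : ℝ} (hm0 : 0 ≤ m) (hm1 : m ≤ 1) (hM : 1 ≤ M) (ha : 0 ≤ a)
    (hqm : q m = 2 * a ^ 2) (hqM : q M = 2 * a ^ 2) :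
    π * a ^ 2 / √2 ≤ ∫ y in m..M, √(2 * a ^ 2 - q y) := by
  have hq0 : q 0 = 1 := by simp [q]
  have ha2 : 2 * a ^ 2 ≤ 1 := by
    rw [← hqm, ← hq0]
    exact strictAntiOn_q.antitoneOn (by simp) ⟨hm0, hm1⟩ hm0
  have ha' : a ≤ 3 / 4 := by nlinarith
  set k : ℝ → ℝ := fun y => √(2 * a ^ 2 - q y) with hk
  have kc : Continuous k := (continuous_const.sub continuous_q).sqrt
  set Y : ℝ → ℝ := fun u => 1 + (a * u) - (a * u) ^ 2 / 6 with hY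
  have hq : ∀ u ∈ Set.Icc (-1 : ℝ) 1, q (Y u) ≤ 2 * a ^ 2 * u ^ 2 := by
    intro u hu
    have := q_le (v := a * u) (by nlinarith [hu.1]) (by nlinarith [hu.2])
    simp only [hY]
    linarith [mul_pow a u 2]
  have hYM : Y 1 ≤ M := by
    have h1 : 1 ≤ Y 1 := by simp only [hY]; nlinarith
    refine (strictMonoOn_q.le_iff_le h1 hM).1 ?_
    have := hq 1 (by norm_num)
    linarith
  have hYm : m ≤ Y (-1) := by
    have h0 : 0 ≤ Y (-1) := by simp only [hY]; nlinarith
    have h1 : Y (-1) ≤ 1 := by simp only [hY]; nlinarith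
    refine (strictAntiOn_q.le_iff_ge ⟨h0, h1⟩ ⟨hm0, hm1⟩).1 ?_
    have := hq (-1) (by norm_num)
    linarith
  have hYY : Y (-1) ≤ Y 1 := by simp only [hY]; nlinarith
  have dY : ∀ u, HasDerivAt Y (a - a ^ 2 * u / 3) u := by
    intro u
    have h := (((hasDerivAt_id u).const_mul a).const_add 1).sub
      ((((hasDerivAt_id u).const_mul a).pow 2).div_const 6)
    refine h.congr_deriv ?_
    simp
    ring
  have Yc : Continuous Y := by fun_prop
  have s1 : ∫ y in Y (-1)..Y 1, k y ≤ ∫ y in m..M, k y :=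
    intervalIntegral.integral_mono_interval hYm hYY hYM
      (Filter.Eventually.of_forall fun y => Real.sqrt_nonneg _) (kc.intervalIntegrable _ _)
  have s2 : ∫ u in (-1 : ℝ)..1, (k ∘ Y) u * (a - a ^ 2 * u / 3) = ∫ y in Y (-1)..Y 1, k y :=
    intervalIntegral.integral_comp_mul_deriv (fun u _ => dY u) (by fun_prop) kc
  have s3 : ∫ u in (-1 : ℝ)..1, (√2 * a * √(1 - u ^ 2)) * (a - a ^ 2 * u / 3) ≤
      ∫ u in (-1 : ℝ)..1, (k ∘ Y) u * (a - a ^ 2 * u / 3) := by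
    apply intervalIntegral.integral_mono_on (by norm_num)
    · exact Continuous.intervalIntegrable (by fun_prop) _ _
    · exact Continuous.intervalIntegrable ((kc.comp Yc).mul (by fun_prop)) _ _
    · intro u hu
      apply mul_le_mul_of_nonneg_right
      · have e : √2 * a * √(1 - u ^ 2) = √(2 * a ^ 2 - 2 * a ^ 2 * u ^ 2) := by
          rw [show 2 * a ^ 2 - 2 * a ^ 2 * u ^ 2 = (2 * a ^ 2) * (1 - u ^ 2) by ring,
            Real.sqrt_mul (by positivity), Real.sqrt_mul (by positivity), Real.sqrt_sq ha]
        rw [e]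
        exact Real.sqrt_le_sqrt (by linarith [hq u hu])
      · have : a ^ 2 * u ≤ a ^ 2 := by nlinarith [hu.2, sq_nonneg a]
        nlinarith
  have odd : ∫ u in (-1 : ℝ)..1, u * √(1 - u ^ 2) = 0 := by
    have h := intervalIntegral.integral_comp_neg (a := -1) (b := 1)
      (fun u : ℝ => u * √(1 - u ^ 2))
    simp only [neg_sq, neg_mul, neg_neg, intervalIntegral.integral_neg] at h
    linarith
  have s4 : ∫ u in (-1 : ℝ)..1, (√2 * a * √(1 - u ^ 2)) * (a - a ^ 2 * u / 3)
      = √2 * a ^ 2 * (π / 2) := by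
    have e : ∀ u : ℝ, (√2 * a * √(1 - u ^ 2)) * (a - a ^ 2 * u / 3)
        = √2 * a ^ 2 * √(1 - u ^ 2) - √2 * a ^ 3 / 3 * (u * √(1 - u ^ 2)) := by
      intro u; ring
    simp only [e]
    rw [intervalIntegral.integral_sub, intervalIntegral.integral_const_mul,
      intervalIntegral.integral_const_mul, odd, integral_sqrt_one_sub_sq]
    · ring
    · exact Continuous.intervalIntegrable (by fun_prop) _ _
    · exact Continuous.intervalIntegrable (by fun_prop) _ _
  have s5 : √2 * a ^ 2 * (π / 2) = π * a ^ 2 / √2 := by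
    rw [eq_div_iff (by positivity)]
    linear_combination (a ^ 2 * π / 2) * (Real.sq_sqrt (show (0 : ℝ) ≤ 2 by norm_num))
  linarith

/-- The inequality in its scale-normalized form, where `q` agrees at the two extreme values. -/
lemma main_normalized {g : ℝ → ℝ} (hg : ContDiff ℝ 1 g) {s t : ℝ}
    (hs : s ∈ Set.Icc (0 : ℝ) 1) (ht : t ∈ Set.Icc (0 : ℝ) 1)
    (hmin : ∀ x ∈ Set.Icc (0 : ℝ) 1, g s ≤ g x) (hmax : ∀ x ∈ Set.Icc (0 : ℝ) 1, g x ≤ g t)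
    (h0 : 0 ≤ g s) (hlt : g s < g t) (hqq : q (g s) = q (g t)) :
    π ^ 2 / 2 * ∫ x in (0 : ℝ)..1, q (g x) ≤ ∫ x in (0 : ℝ)..1, (deriv g x) ^ 2 := by
  have hm1 : g s ≤ 1 := by
    by_contra! h
    exact hqq.not_lt (strictMonoOn_q h.le (h.trans hlt).le hlt)
  have hM1 : 1 ≤ g t := by
    by_contra! h
    exact hqq.not_gt (strictAntiOn_q ⟨h0, hm1⟩ ⟨h0.trans hlt.le, h.le⟩ hlt)
  have hqle : ∀ y, g s ≤ y → y ≤ g t → q y ≤ q (g s) := by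
    intro y h1 h2
    rcases le_total y 1 with h | h
    · exact strictAntiOn_q.antitoneOn ⟨h0, hm1⟩ ⟨h0.trans h1, h⟩ h1
    · rw [hqq]
      exact strictMonoOn_q.monotoneOn h hM1 h2
  have hq1 : q 1 = 0 := by simp [q]
  have hE : 0 ≤ q (g s) := hq1 ▸ hqle 1 hm1 hM1
  obtain ⟨a, ha, hEa⟩ : ∃ a : ℝ, 0 ≤ a ∧ q (g s) = 2 * a ^ 2 :=
    ⟨√(q (g s) / 2), Real.sqrt_nonneg _, by rw [Real.sq_sqrt (by positivity)]; ring⟩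
  have hwell := well_bound h0 hm1 hM1 ha hEa (hqq ▸ hEa)
  set k : ℝ → ℝ := fun y => √(2 * a ^ 2 - q y) with hk
  have kc : Continuous k := (continuous_const.sub continuous_q).sqrt
  have gc : Continuous g := hg.continuous
  have g'c : Continuous (deriv g) := hg.continuous_deriv le_rfl
  have qc := continuous_q
  have sub : ∫ x in s..t, (k ∘ g) x * deriv g x = ∫ y in g s..g t, k y :=
    intervalIntegral.integral_comp_mul_deriv
      (fun x _ => (hg.differentiable one_ne_zero x).hasDerivAt) g'c.continuousOn kc
  have cc : Continuous fun x => (k ∘ g) x * deriv g x := (kc.comp gc).mul g'c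
  have path : ∫ y in g s..g t, k y ≤ ∫ x in (0 : ℝ)..1, |(k ∘ g) x * deriv g x| := by
    rw [← sub, intervalIntegral.integral_of_le zero_le_one]
    have h := intervalIntegral.norm_integral_le_integral_norm_uIoc (μ := volume) (a := s) (b := t)
      (f := fun x => (k ∘ g) x * deriv g x)
    simp only [Real.norm_eq_abs] at h
    refine (le_abs_self _).trans (h.trans ?_)
    refine setIntegral_mono_set (cc.abs.integrableOn_Ioc)
      (Filter.Eventually.of_forall fun x => abs_nonneg _) (Filter.Eventually.of_forall ?_)
    exact Set.Ioc_subset_Ioc (le_min hs.1 ht.1) (max_le hs.2 ht.2)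
  have s2 : √2 ^ 2 = 2 := Real.sq_sqrt (by norm_num)
  have pw : ∫ x in (0 : ℝ)..1, √2 * π * |(k ∘ g) x * deriv g x| ≤
      ∫ x in (0 : ℝ)..1, ((deriv g x) ^ 2 + π ^ 2 / 2 * (2 * a ^ 2 - q (g x))) := by
    apply intervalIntegral.integral_mono_on zero_le_one
    · exact (cc.abs.const_mul _).intervalIntegrable _ _
    · exact Continuous.intervalIntegrable (by fun_prop) _ _
    · intro x hx
      have hkk : k (g x) ^ 2 = 2 * a ^ 2 - q (g x) :=
        Real.sq_sqrt (by linarith [hqle _ (hmin x hx) (hmax x hx)])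
      have hk0 : 0 ≤ k (g x) := Real.sqrt_nonneg _
      rw [← hkk, abs_mul, Function.comp, abs_of_nonneg hk0, ← sq_abs (deriv g x)]
      have e : |deriv g x| ^ 2 + π ^ 2 / 2 * k (g x) ^ 2 - √2 * π * (k (g x) * |deriv g x|)
          = (|deriv g x| - √2 / 2 * π * k (g x)) ^ 2 := by
        linear_combination (-(π ^ 2 * k (g x) ^ 2 / 4)) * s2
      nlinarith [sq_nonneg (|deriv g x| - √2 / 2 * π * k (g x))]
  rw [intervalIntegral.integral_const_mul, intervalIntegral.integral_add,
    intervalIntegral.integral_const_mul, intervalIntegral.integral_sub] at pw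
  · simp only [intervalIntegral.integral_const, sub_zero, one_smul] at pw
    have hfin := mul_le_mul_of_nonneg_left (hwell.trans path)
      (show (0 : ℝ) ≤ √2 * π by positivity)
    have e : √2 * π * (π * a ^ 2 / √2) = π ^ 2 * a ^ 2 := by
      field_simp
    rw [e] at hfin
    linarith
  · exact Continuous.intervalIntegrable (by fun_prop) _ _
  · exact Continuous.intervalIntegrable (by fun_prop) _ _
  · exact Continuous.intervalIntegrable (by fun_prop) _ _
  · exact Continuous.intervalIntegrable (by fun_prop) _ _

/-! ### Scaling -/

lemma sq_mul_log_div (y : ℝ) {r : ℝ} (hr : r ≠ 0) :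
    y ^ 2 * Real.log (y / r) = y ^ 2 * (Real.log y - Real.log r) := by
  rcases eq_or_ne y 0 with rfl | hy
  · simp
  · rw [Real.log_div hy hr]

/-- Any two values `m < M` can be rescaled to a pair on which `q` agrees. -/
lemma exists_scale {m M : ℝ} (h0 : 0 ≤ m) (h : m < M) :
    ∃ r : ℝ, 0 < r ∧ q (m / r) = q (M / r) := by
  have hd : 0 < M ^ 2 - m ^ 2 := by nlinarith
  -- `r ^ 2` is the identric mean of `m ^ 2` and `M ^ 2`.
  refine ⟨Real.exp ((2 * M ^ 2 * Real.log M - M ^ 2 - 2 * m ^ 2 * Real.log m + m ^ 2) /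
    (2 * (M ^ 2 - m ^ 2))), Real.exp_pos _, ?_⟩
  set A := (2 * M ^ 2 * Real.log M - M ^ 2 - 2 * m ^ 2 * Real.log m + m ^ 2) /
    (2 * (M ^ 2 - m ^ 2)) with hA
  have hA' : A * (2 * (M ^ 2 - m ^ 2)) =
      2 * M ^ 2 * Real.log M - M ^ 2 - 2 * m ^ 2 * Real.log m + m ^ 2 := by
    rw [hA, div_mul_cancel₀ _ (by positivity)]
  have hr := (Real.exp_pos A).ne'
  have e : ∀ y : ℝ, q (y / Real.exp A) =
      (2 * y ^ 2 * (Real.log y - A) - y ^ 2) / Real.exp A ^ 2 + 1 := by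
    intro y
    have := sq_mul_log_div y hr
    rw [Real.log_exp] at this
    rw [mul_assoc, ← this, q]
    field_simp
  rw [e, e]
  congr 2
  linarith

end LogSobolev

open LogSobolev in
/-- Sharp log-Sobolev inequality on the unit interval: for a non-negative `C¹`
function `f` on `[0,1]` with `∫₀¹ f² = 1`, `π² ∫₀¹ f² log f ≤ ∫₀¹ f'²`.
(Note `Real.log 0 = 0`, giving the convention `0² log 0 = 0`.) -/
theorem logSobolev_unit_interval (f : ℝ → ℝ)
    (hf : ContDiff ℝ 1 f)
    (hpos : ∀ x ∈ Set.Icc (0:ℝ) 1, 0 ≤ f x)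
    (hnorm : ∫ x in (0:ℝ)..1, (f x) ^ 2 = 1) :
    π ^ 2 * ∫ x in (0:ℝ)..1, (f x) ^ 2 * Real.log (f x) ≤
      ∫ x in (0:ℝ)..1, (deriv f x) ^ 2 := by
  have fc := hf.continuous
  obtain ⟨s, hs, hmin⟩ := isCompact_Icc.exists_isMinOn (Set.nonempty_Icc.2 zero_le_one)
    (fc.continuousOn (s := Set.Icc (0 : ℝ) 1))
  obtain ⟨t, ht, hmax⟩ := isCompact_Icc.exists_isMaxOn (Set.nonempty_Icc.2 zero_le_one)
    (fc.continuousOn (s := Set.Icc (0 : ℝ) 1))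
  have hmin : ∀ x ∈ Set.Icc (0 : ℝ) 1, f s ≤ f x := fun x hx => hmin hx
  have hmax : ∀ x ∈ Set.Icc (0 : ℝ) 1, f x ≤ f t := fun x hx => hmax hx
  rcases (hmin t ht).eq_or_lt with heq | hlt
  · -- A constant `f` is identically `1`, and the left-hand side vanishes.
    have hc : ∀ x ∈ Set.Icc (0 : ℝ) 1, f x = f s :=
      fun x hx => le_antisymm (heq ▸ hmax x hx) (hmin x hx)
    have hI : Set.uIcc (0 : ℝ) 1 = Set.Icc 0 1 := Set.uIcc_of_le zero_le_one
    have e1 : ∫ x in (0 : ℝ)..1, (f x) ^ 2 = ∫ x in (0 : ℝ)..1, (f s) ^ 2 :=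
      intervalIntegral.integral_congr fun x hx => by simp only [hc x (hI ▸ hx)]
    have e2 : ∫ x in (0 : ℝ)..1, (f x) ^ 2 * Real.log (f x) =
        ∫ x in (0 : ℝ)..1, (f s) ^ 2 * Real.log (f s) :=
      intervalIntegral.integral_congr fun x hx => by simp only [hc x (hI ▸ hx)]
    have hfs : f s = 1 := by
      rw [e1] at hnorm
      simp only [intervalIntegral.integral_const, sub_zero, one_smul] at hnorm
      nlinarith [hpos s hs]
    rw [e2, hfs]
    simp only [Real.log_one, mul_zero, intervalIntegral.integral_zero]
    exact intervalIntegral.integral_nonneg zero_le_one fun x _ => sq_nonneg _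
  · obtain ⟨r, hr, hq⟩ := exists_scale (hpos s hs) hlt
    have hg : ContDiff ℝ 1 fun x => f x / r := hf.div_const r
    have main := main_normalized hg hs ht
      (fun x hx => div_le_div_of_nonneg_right (hmin x hx) hr.le)
      (fun x hx => div_le_div_of_nonneg_right (hmax x hx) hr.le)
      (div_nonneg (hpos s hs) hr.le) (div_lt_div_of_pos_right hlt hr) hq
    have ed : ∀ x, (deriv (fun x => f x / r) x) ^ 2 = (1 / r ^ 2) * (deriv f x) ^ 2 := by
      intro x
      rw [deriv_div_const]
      field_simp
    have eq : ∀ x, q (f x / r) = (2 / r ^ 2) * ((f x) ^ 2 * Real.log (f x))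
        - ((2 * Real.log r + 1) / r ^ 2) * (f x) ^ 2 + 1 := by
      intro x
      have h := sq_mul_log_div (f x) hr.ne'
      have : q (f x / r) = (2 / r ^ 2) * ((f x) ^ 2 * Real.log (f x / r))
          - (1 / r ^ 2) * (f x) ^ 2 + 1 := by
        rw [q]; field_simp
      rw [this, h]
      ring
    have c1 : Continuous fun x => (f x) ^ 2 * Real.log (f x) := continuous_sq_mul_log.comp fc
    simp only [ed, eq] at main
    rw [intervalIntegral.integral_add, intervalIntegral.integral_sub,
      intervalIntegral.integral_const_mul, intervalIntegral.integral_const_mul,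
      intervalIntegral.integral_const_mul, hnorm] at main
    · simp only [intervalIntegral.integral_const, sub_zero, one_smul, mul_one] at main
      have hlog : 2 * Real.log r ≤ r ^ 2 - 1 := by
        have := Real.log_le_sub_one_of_pos (show 0 < r ^ 2 by positivity)
        rwa [Real.log_pow, Nat.cast_ofNat] at this
      have main' := mul_le_mul_of_nonneg_left main (sq_nonneg r)
      set I := ∫ x in (0 : ℝ)..1, (f x) ^ 2 * Real.log (f x)
      set J := ∫ x in (0 : ℝ)..1, (deriv f x) ^ 2
      have e1 : r ^ 2 * (π ^ 2 / 2 * (2 / r ^ 2 * I - (2 * Real.log r + 1) / r ^ 2 + 1))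
          = π ^ 2 * I + π ^ 2 / 2 * (r ^ 2 - 1 - 2 * Real.log r) := by
        field_simp
        ring
      have e2 : r ^ 2 * (1 / r ^ 2 * J) = J := by field_simp
      rw [e1, e2] at main'
      have : 0 ≤ π ^ 2 / 2 * (r ^ 2 - 1 - 2 * Real.log r) :=
        mul_nonneg (by positivity) (by linarith)
      linarith
    · exact (c1.const_mul _).intervalIntegrable _ _
    · exact Continuous.intervalIntegrable (by fun_prop) _ _
    · exact ((c1.const_mul _).sub ((fc.pow 2).const_mul _)).intervalIntegrable _ _
    · exact Continuous.intervalIntegrable (by fun_prop) _ _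
end

section
/- Let a < b be real numbers, let f be a non-negative C¹ function on the interval [a,b], and let m > 0 satisfy (1/(b−a)) ∫ₐᵇ f(x)² dx = m². Then (π²/(b−a)²) · ( ∫ₐᵇ f(x)² log f(x) dx − (b−a) m² log m ) ≤ ∫ₐᵇ f'(x)² dx. -/
/-!
The constant is sharp, so the proof is a calibration argument that is exact to second order at
constant functions.

Put `W s = s² log s - (s² - 1)/2`, so that `W ≥ 0`, `W' = 2 s log s`, and `W` decreases on `[0,1]`
and increases on `[1,∞)`. Multiplying `f` by a constant, its minimum `α` and maximum `β` on `[a,b]`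
satisfy `α ≤ 1 ≤ β` and `W α = W β = δ`, with `δ ≤ W 0 = 1/2` (`exists_scale`). Then
`δ - W (f x) ≥ 0` on `[a,b]`, and with `k = π/(b-a)` the inequality `A² + B² ≥ 2AB` and the
substitution `s = f x` between a minimum point and a maximum point give (`calibration`)
`∫ f'² + k² ∫ (δ - W ∘ f) ≥ 2k ∫_α^β √(δ - W s) ds`.

The integral on the right is at least `π δ / 2` (`pi_mul_le_integral`): the explicit curve
`s = 1 + y - y²/6` satisfies `W s ≤ y²` for `|y| ≤ 3/4` (`W_curve_le`), so the integral dominates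
`∫_{-√δ}^{√δ} √(δ - y²) (1 - y/3) dy = π δ / 2`, the odd part vanishing.
The terms with `δ` cancel, and what is left follows from `M log M ≥ M - 1`, with `M` the mean
of `f²`.
-/

open Real MeasureTheory intervalIntegral

namespace LogSobolevInterval

/-- The potential `s² log s - (s² - 1)/2`, with its zero of order two at `s = 1`. -/
noncomputable def W (s : ℝ) : ℝ := s ^ 2 * log s - (s ^ 2 - 1) / 2

lemma continuous_sq_mul_log : Continuous fun s : ℝ => s ^ 2 * log s := by
  have h : (fun s : ℝ => s ^ 2 * log s) = fun s => s * (s * log s) := by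
    funext s; ring
  rw [h]
  exact continuous_id.mul Real.continuous_mul_log

lemma continuous_W : Continuous W := by
  unfold W
  exact continuous_sq_mul_log.sub (by fun_prop)

lemma hasDerivAt_W {s : ℝ} (hs : 0 < s) : HasDerivAt W (2 * s * log s) s := by
  have h1 : HasDerivAt (fun s : ℝ => s ^ 2) (2 * s) s := by simpa using hasDerivAt_pow 2 s
  have h := (h1.mul (Real.hasDerivAt_log hs.ne')).sub ((h1.sub_const 1).div_const 2)
  refine h.congr_deriv ?_
  field_simp
  ring

lemma strictAntiOn_W : StrictAntiOn W (Set.Icc 0 1) := by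
  refine strictAntiOn_of_deriv_neg (convex_Icc 0 1) continuous_W.continuousOn ?_
  intro s hs
  rw [interior_Icc] at hs
  rw [(hasDerivAt_W hs.1).deriv]
  have := Real.log_neg hs.1 hs.2
  have h0 := hs.1
  nlinarith

lemma strictMonoOn_W : StrictMonoOn W (Set.Ici 1) := by
  refine strictMonoOn_of_deriv_pos (convex_Ici 1) continuous_W.continuousOn ?_
  intro s hs
  rw [interior_Ici] at hs
  have hs' : 1 < s := hs
  rw [(hasDerivAt_W (by linarith)).deriv]
  have := Real.log_pos hs'
  positivity

lemma W_one : W 1 = 0 := by simp [W]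

lemma W_nonneg {s : ℝ} (hs : 0 ≤ s) : 0 ≤ W s := by
  rw [← W_one]
  rcases le_total s 1 with h | h
  · exact strictAntiOn_W.antitoneOn ⟨hs, h⟩ ⟨zero_le_one, le_rfl⟩ h
  · exact strictMonoOn_W.monotoneOn (Set.mem_Ici.2 le_rfl) h h

/-- The rescaling that puts two values on the same level set of `W`, one on each side of `1`. -/
lemma exists_scale {α β : ℝ} (hα : 0 ≤ α) (hαβ : α ≤ β) (hβ : 0 < β) :
    ∃ c : ℝ, 0 < c ∧ α / c ≤ 1 ∧ 1 ≤ β / c ∧ W (α / c) = W (β / c) := by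
  rcases hαβ.eq_or_lt with rfl | hlt
  · exact ⟨α, hβ, by rw [div_self hβ.ne'], by rw [div_self hβ.ne'], rfl⟩
  have hd : 0 < β ^ 2 - α ^ 2 := by nlinarith
  -- `W (α / c) = W (β / c)` is affine in `log c`, so `c` can be solved for.
  set l : ℝ := (β ^ 2 * log β - α ^ 2 * log α) / (β ^ 2 - α ^ 2) - 1 / 2 with hl
  have hl' : (l + 1 / 2) * (β ^ 2 - α ^ 2) = β ^ 2 * log β - α ^ 2 * log α := by
    rw [hl]; field_simp; ring
  have hc : 0 < exp l := exp_pos l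
  have key : ∀ s : ℝ, 0 ≤ s →
      W (s / exp l) = (s ^ 2 * log s - s ^ 2 * (l + 1 / 2)) / exp l ^ 2 + 1 / 2 := by
    intro s hs
    rcases hs.eq_or_lt with rfl | hs
    · norm_num [W]
    · unfold W
      rw [Real.log_div hs.ne' hc.ne', Real.log_exp]
      field_simp
      ring
  have hW : W (α / exp l) = W (β / exp l) := by
    rw [key α hα, key β hβ.le]
    congr 2
    linarith
  have hlt' : α / exp l < β / exp l := by gcongr
  have hα' : 0 ≤ α / exp l := by positivity
  refine ⟨exp l, hc, ?_, ?_, hW⟩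
  · by_contra! h
    exact (strictMonoOn_W (Set.mem_Ici.2 h.le) (Set.mem_Ici.2 (h.trans hlt').le) hlt').ne hW
  · by_contra! h
    exact (strictAntiOn_W ⟨hα', (hlt'.trans h).le⟩ ⟨hα'.trans hlt'.le, h.le⟩ hlt').ne hW.symm

lemma curve_pos {y : ℝ} (h1 : -(3 / 4) ≤ y) (h2 : y ≤ 3 / 4) : 0 < 1 + y - y ^ 2 / 6 := by
  nlinarith

lemma hasDerivAt_curve (y : ℝ) : HasDerivAt (fun y : ℝ => 1 + y - y ^ 2 / 6) (1 - y / 3) y := by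
  have h1 : HasDerivAt (fun s : ℝ => s ^ 2) (2 * y) y := by simpa using hasDerivAt_pow 2 y
  refine (((hasDerivAt_id y).const_add 1).sub (h1.div_const 6)).congr_deriv ?_
  ring

/-- Up to the positive factor `2 s s'` with `s = 1 + y - y²/6`, this is the derivative of
`y² - W s`. -/
noncomputable def slope (y : ℝ) : ℝ :=
  y / ((1 + y - y ^ 2 / 6) * (1 - y / 3)) - log (1 + y - y ^ 2 / 6)

lemma slope_mono : MonotoneOn slope (Set.Icc (-(3 / 4)) (3 / 4)) := by
  have hder : ∀ y ∈ Set.Icc (-(3 / 4) : ℝ) (3 / 4), HasDerivAt slope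
      ((1 * ((1 + y - y ^ 2 / 6) * (1 - y / 3)) -
        y * ((1 - y / 3) * (1 - y / 3) + (1 + y - y ^ 2 / 6) * (-(1 / 3)))) /
        ((1 + y - y ^ 2 / 6) * (1 - y / 3)) ^ 2 - (1 - y / 3) / (1 + y - y ^ 2 / 6)) y := by
    intro y hy
    have hs := curve_pos hy.1 hy.2
    have ht : 0 < 1 - y / 3 := by linarith [hy.2]
    have h3 : HasDerivAt (fun y : ℝ => 1 - y / 3) (-(1 / 3)) y :=
      ((hasDerivAt_id y).div_const 3).const_sub 1
    exact ((hasDerivAt_id y).div ((hasDerivAt_curve y).mul h3) (mul_pos hs ht).ne').sub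
      ((hasDerivAt_curve y).log hs.ne')
  refine monotoneOn_of_deriv_nonneg (convex_Icc _ _)
    (fun y hy => (hder y hy).continuousAt.continuousWithinAt)
    (fun y hy => (hder y (interior_subset hy)).differentiableAt.differentiableWithinAt) ?_
  intro y hy
  have hy := interior_subset hy
  rw [(hder y hy).deriv]
  have hs := curve_pos hy.1 hy.2
  have ht : 0 < 1 - y / 3 := by linarith [hy.2]
  have e : ((1 * ((1 + y - y ^ 2 / 6) * (1 - y / 3)) -
        y * ((1 - y / 3) * (1 - y / 3) + (1 + y - y ^ 2 / 6) * (-(1 / 3)))) /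
        ((1 + y - y ^ 2 / 6) * (1 - y / 3)) ^ 2 - (1 - y / 3) / (1 + y - y ^ 2 / 6))
      = (1 + y ^ 2 / 2 - y ^ 3 / 9 - (1 - y / 3) ^ 3 * (1 + y - y ^ 2 / 6)) /
        ((1 + y - y ^ 2 / 6) * (1 - y / 3)) ^ 2 := by
    rw [eq_div_iff (by positivity), sub_mul, div_mul_cancel₀ _ (by positivity)]
    rw [mul_pow, div_mul_eq_mul_div, sub_eq_iff_eq_add, ← sub_eq_iff_eq_add', eq_div_iff hs.ne']
    ring
  rw [e]
  refine div_nonneg ?_ (by positivity)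
  have hfac : 1 + y ^ 2 / 2 - y ^ 3 / 9 - (1 - y / 3) ^ 3 * (1 + y - y ^ 2 / 6)
      = y ^ 2 * (4 / 3 - 31 / 54 * y + 5 / 54 * y ^ 2 - y ^ 3 / 162) := by ring
  rw [hfac]
  refine mul_nonneg (sq_nonneg y) ?_
  have h1 := hy.1
  have h2 := hy.2
  have h3 : y ^ 3 ≤ y ^ 2 := by nlinarith [sq_nonneg y]
  nlinarith [sq_nonneg y]

lemma W_curve_le {y : ℝ} (h1 : -(3 / 4) ≤ y) (h2 : y ≤ 3 / 4) :
    W (1 + y - y ^ 2 / 6) ≤ y ^ 2 := by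
  set K : ℝ → ℝ := fun y => y ^ 2 - W (1 + y - y ^ 2 / 6) with hK
  have hder : ∀ y ∈ Set.Icc (-(3 / 4) : ℝ) (3 / 4), HasDerivAt K
      (2 * ((1 + y - y ^ 2 / 6) * (1 - y / 3)) * slope y) y := by
    intro y hy
    have hs := curve_pos hy.1 hy.2
    have ht : 0 < 1 - y / 3 := by linarith [hy.2]
    have hq : HasDerivAt (fun s : ℝ => s ^ 2) (2 * y) y := by simpa using hasDerivAt_pow 2 y
    refine (hq.sub ((hasDerivAt_W hs).comp y (hasDerivAt_curve y))).congr_deriv ?_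
    unfold slope
    have hc : (1 + y - y ^ 2 / 6) * (1 - y / 3) *
        (y / ((1 + y - y ^ 2 / 6) * (1 - y / 3))) = y :=
      mul_div_cancel₀ _ (mul_pos hs ht).ne'
    linear_combination (-2) * hc
  have hK0 : K 0 = 0 := by simp [hK, W_one]
  have hslope0 : slope 0 = 0 := by simp [slope]
  have hfac : ∀ y ∈ Set.Icc (-(3 / 4) : ℝ) (3 / 4),
      0 < 2 * ((1 + y - y ^ 2 / 6) * (1 - y / 3)) := by
    intro y hy
    have hs := curve_pos hy.1 hy.2
    have ht : 0 < 1 - y / 3 := by linarith [hy.2]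
    positivity
  have h0 : (0 : ℝ) ∈ Set.Icc (-(3 / 4) : ℝ) (3 / 4) := by constructor <;> norm_num
  suffices 0 ≤ K y by simp only [hK] at this; linarith
  rw [← hK0]
  rcases le_total y 0 with hy | hy
  · have hsub : Set.Icc (-(3 / 4) : ℝ) 0 ⊆ Set.Icc (-(3 / 4)) (3 / 4) :=
      Set.Icc_subset_Icc le_rfl (by norm_num)
    have hanti : AntitoneOn K (Set.Icc (-(3 / 4)) 0) := by
      refine antitoneOn_of_deriv_nonpos (convex_Icc _ _)
        (fun z hz => (hder z (hsub hz)).continuousAt.continuousWithinAt)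
        (fun z hz => (hder z (hsub (interior_subset hz))).differentiableAt.differentiableWithinAt)
        ?_
      intro z hz
      have hz := interior_subset hz
      rw [(hder z (hsub hz)).deriv]
      have := slope_mono (hsub hz) h0 hz.2
      exact mul_nonpos_of_nonneg_of_nonpos (hfac z (hsub hz)).le (by linarith)
    exact hanti ⟨h1, hy⟩ ⟨by norm_num, le_rfl⟩ hy
  · have hsub : Set.Icc (0 : ℝ) (3 / 4) ⊆ Set.Icc (-(3 / 4)) (3 / 4) :=
      Set.Icc_subset_Icc (by norm_num) le_rfl
    have hmono : MonotoneOn K (Set.Icc 0 (3 / 4)) := by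
      refine monotoneOn_of_deriv_nonneg (convex_Icc _ _)
        (fun z hz => (hder z (hsub hz)).continuousAt.continuousWithinAt)
        (fun z hz => (hder z (hsub (interior_subset hz))).differentiableAt.differentiableWithinAt)
        ?_
      intro z hz
      have hz := interior_subset hz
      rw [(hder z (hsub hz)).deriv]
      have := slope_mono h0 (hsub hz) hz.1
      exact mul_nonneg (hfac z (hsub hz)).le (by linarith)
    exact hmono ⟨le_rfl, by norm_num⟩ ⟨hy, h2⟩ hy

lemma integral_odd_sqrt : ∫ z in (-1 : ℝ)..1, z * √(1 - z ^ 2) = 0 := by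
  have h := intervalIntegral.integral_comp_neg (a := -1) (b := 1)
    (fun z : ℝ => z * √(1 - z ^ 2))
  simp only [neg_mul, neg_sq, neg_neg, intervalIntegral.integral_neg] at h
  linarith

lemma pi_mul_le_integral {α β : ℝ} (hα : 0 ≤ α) (hα1 : α ≤ 1) (hβ1 : 1 ≤ β)
    (hW : W α = W β) : π / 2 * W α ≤ ∫ s in α..β, √(W α - W s) := by
  obtain ⟨R, hR0, hR⟩ : ∃ R : ℝ, 0 ≤ R ∧ W α = R ^ 2 :=
    ⟨√(W α), sqrt_nonneg _, (Real.sq_sqrt (W_nonneg hα)).symm⟩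
  have hhalf : R ^ 2 ≤ 1 / 2 := by
    rw [← hR]
    have := strictAntiOn_W.antitoneOn (Set.left_mem_Icc.2 zero_le_one) ⟨hα, hα1⟩ hα
    have h0 : W 0 = 1 / 2 := by norm_num [W]
    linarith
  have hR34 : R ≤ 3 / 4 := by nlinarith
  have hcont : Continuous fun s => √(W α - W s) := (continuous_const.sub continuous_W).sqrt
  have hWu := W_curve_le (y := -R) (by linarith) (by linarith)
  have hWv := W_curve_le (y := R) (by linarith) hR34
  have hupos := curve_pos (y := -R) (by linarith) (by linarith)
  have hu1 : 1 + -R - (-R) ^ 2 / 6 ≤ 1 := by nlinarith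
  have hv1 : 1 ≤ 1 + R - R ^ 2 / 6 := by nlinarith
  have hu : α ≤ 1 + -R - (-R) ^ 2 / 6 := by
    by_contra! h
    have := strictAntiOn_W ⟨hupos.le, hu1⟩ ⟨hα, hα1⟩ h
    rw [hR] at this
    nlinarith
  have hv : 1 + R - R ^ 2 / 6 ≤ β := by
    by_contra! h
    have := strictMonoOn_W (Set.mem_Ici.2 hβ1) (Set.mem_Ici.2 hv1) h
    rw [← hW, hR] at this
    linarith
  have hmono : ∫ s in (1 + -R - (-R) ^ 2 / 6)..(1 + R - R ^ 2 / 6), √(W α - W s) ≤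
      ∫ s in α..β, √(W α - W s) :=
    intervalIntegral.integral_mono_interval hu (by linarith) hv
      (Filter.Eventually.of_forall fun s => sqrt_nonneg _) (hcont.intervalIntegrable _ _)
  refine le_trans ?_ hmono
  -- Substitute `s = 1 + R z - (R z)² / 6`.
  have hsub := intervalIntegral.integral_comp_mul_deriv (a := -1) (b := 1)
    (f := fun z : ℝ => 1 + R * z - (R * z) ^ 2 / 6) (f' := fun z => (1 - R * z / 3) * R)
    (g := fun s => √(W α - W s))
    (fun z _ => by
      have h := (hasDerivAt_curve (R * z)).comp z ((hasDerivAt_id z).const_mul R)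
      exact h.congr_deriv (by ring))
    (by fun_prop) hcont
  simp only [mul_neg, mul_one, Function.comp_def] at hsub
  rw [← hsub]
  have hlow : π / 2 * W α = ∫ z in (-1 : ℝ)..1,
      (R ^ 2 * √(1 - z ^ 2) - R ^ 3 / 3 * (z * √(1 - z ^ 2))) := by
    have hc1 : Continuous fun z : ℝ => R ^ 2 * √(1 - z ^ 2) := by fun_prop
    have hc2 : Continuous fun z : ℝ => R ^ 3 / 3 * (z * √(1 - z ^ 2)) := by fun_prop
    rw [intervalIntegral.integral_sub (hc1.intervalIntegrable _ _) (hc2.intervalIntegrable _ _),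
      intervalIntegral.integral_const_mul, intervalIntegral.integral_const_mul,
      integral_odd_sqrt, integral_sqrt_one_sub_sq, hR]
    ring
  rw [hlow]
  refine intervalIntegral.integral_mono_on (by norm_num)
    (Continuous.intervalIntegrable (by fun_prop) _ _)
    (Continuous.intervalIntegrable ((hcont.comp (by fun_prop)).mul (by fun_prop)) _ _) ?_
  intro z hz
  have hz1 := hz.1
  have hz2 := hz.2
  have hWz := W_curve_le (y := R * z) (by nlinarith) (by nlinarith)
  have hsq : R * √(1 - z ^ 2) ≤ √(W α - W (1 + R * z - (R * z) ^ 2 / 6)) := by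
    rw [hR]
    refine Real.le_sqrt_of_sq_le ?_
    rw [mul_pow, Real.sq_sqrt (by nlinarith)]
    nlinarith
  have hw : 0 ≤ (1 - R * z / 3) * R := mul_nonneg (by nlinarith) hR0
  calc R ^ 2 * √(1 - z ^ 2) - R ^ 3 / 3 * (z * √(1 - z ^ 2))
      = R * √(1 - z ^ 2) * ((1 - R * z / 3) * R) := by ring
    _ ≤ _ := mul_le_mul_of_nonneg_right hsq hw

/-- A Modica–Mortola type lower bound: the energy of a path controls the weighted length of the
range it sweeps out. -/
lemma calibration {a b : ℝ} {g p : ℝ → ℝ} (hg : ContDiff ℝ 1 g) (hp : Continuous p)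
    {x₀ x₁ : ℝ} (h₀ : x₀ ∈ Set.Icc a b) (h₁ : x₁ ∈ Set.Icc a b) :
    2 * ∫ s in (g x₀)..(g x₁), p s ≤ ∫ x in a..b, ((deriv g x) ^ 2 + p (g x) ^ 2) := by
  have hab : a ≤ b := h₀.1.trans h₀.2
  have hg' : Continuous (deriv g) := hg.continuous_deriv le_rfl
  have hd : ∀ x, HasDerivAt g (deriv g x) x := fun x =>
    (hg.differentiable (by norm_num) x).hasDerivAt
  have hpg : Continuous fun x => p (g x) := hp.comp hg.continuous
  have hc : Continuous fun x => (deriv g x) ^ 2 + p (g x) ^ 2 := by fun_prop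
  have hsub := intervalIntegral.integral_comp_mul_deriv (a := x₀) (b := x₁)
    (fun x _ => hd x) hg'.continuousOn hp
  rw [← hsub, ← intervalIntegral.integral_const_mul]
  calc ∫ x in x₀..x₁, 2 * ((p ∘ g) x * deriv g x)
      ≤ |∫ x in x₀..x₁, 2 * ((p ∘ g) x * deriv g x)| := le_abs_self _
    _ ≤ |∫ x in x₀..x₁, ‖2 * ((p ∘ g) x * deriv g x)‖| :=
        (Real.norm_eq_abs _).symm.trans_le intervalIntegral.norm_integral_le_abs_integral_norm
    _ ≤ |∫ x in a..b, ‖2 * ((p ∘ g) x * deriv g x)‖| := by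
        refine intervalIntegral.abs_integral_mono_interval ?_
          (Filter.Eventually.of_forall fun x => norm_nonneg _)
          (Continuous.intervalIntegrable (by simp only [Function.comp_def]; fun_prop) _ _)
        rw [Set.uIoc_of_le hab]
        exact Set.Ioc_subset_Ioc (le_min h₀.1 h₁.1) (max_le h₀.2 h₁.2)
    _ = ∫ x in a..b, ‖2 * ((p ∘ g) x * deriv g x)‖ :=
        abs_of_nonneg (intervalIntegral.integral_nonneg hab fun x _ => norm_nonneg _)
    _ ≤ ∫ x in a..b, ((deriv g x) ^ 2 + p (g x) ^ 2) := by
        refine intervalIntegral.integral_mono_on hab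
          (Continuous.intervalIntegrable (by simp only [Function.comp_def]; fun_prop) _ _)
          (hc.intervalIntegrable _ _) ?_
        intro x _
        rw [Real.norm_eq_abs, Function.comp_apply, abs_le]
        constructor <;> nlinarith [sq_nonneg (p (g x) - deriv g x),
          sq_nonneg (p (g x) + deriv g x)]

/-- The inequality for a function whose extreme values lie on one level set of `W`. -/
lemma normalized {a b : ℝ} (hab : a < b) {g : ℝ → ℝ} (hg : ContDiff ℝ 1 g) {x₀ x₁ : ℝ}
    (h₀ : x₀ ∈ Set.Icc a b) (h₁ : x₁ ∈ Set.Icc a b)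
    (hmin : ∀ x ∈ Set.Icc a b, g x₀ ≤ g x) (hmax : ∀ x ∈ Set.Icc a b, g x ≤ g x₁)
    (hpos : 0 ≤ g x₀) (hle : g x₀ ≤ 1) (hge : 1 ≤ g x₁) (hW : W (g x₀) = W (g x₁)) :
    π ^ 2 / (b - a) ^ 2 * ∫ x in a..b, W (g x) ≤ ∫ x in a..b, (deriv g x) ^ 2 := by
  have hL : 0 < b - a := sub_pos.2 hab
  set δ := W (g x₀) with hδ
  set k := π / (b - a) with hk
  have hk0 : 0 < k := div_pos pi_pos hL
  have hWle : ∀ x ∈ Set.Icc a b, W (g x) ≤ δ := by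
    intro x hx
    rcases le_total (g x) 1 with h | h
    · exact strictAntiOn_W.antitoneOn ⟨hpos, hle⟩ ⟨hpos.trans (hmin x hx), h⟩ (hmin x hx)
    · rw [hW]
      exact strictMonoOn_W.monotoneOn (Set.mem_Ici.2 h) (Set.mem_Ici.2 hge) (hmax x hx)
  have hcW : Continuous fun x => W (g x) := continuous_W.comp hg.continuous
  have hg' : Continuous (deriv g) := hg.continuous_deriv le_rfl
  have hcal := calibration (p := fun s => k * √(δ - W s)) hg
    (continuous_const.mul (continuous_const.sub continuous_W).sqrt)
    h₀ h₁
  have hlow := pi_mul_le_integral hpos hle hge hW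
  have hint : ∫ x in a..b, ((deriv g x) ^ 2 + (k * √(δ - W (g x))) ^ 2) =
      (∫ x in a..b, (deriv g x) ^ 2) + k ^ 2 * ((b - a) * δ - ∫ x in a..b, W (g x)) := by
    have hcongr : ∫ x in a..b, ((deriv g x) ^ 2 + (k * √(δ - W (g x))) ^ 2) =
        ∫ x in a..b, ((deriv g x) ^ 2 + k ^ 2 * (δ - W (g x))) := by
      refine intervalIntegral.integral_congr fun x hx => ?_
      rw [Set.uIcc_of_le hab.le] at hx
      rw [mul_pow, Real.sq_sqrt (sub_nonneg.2 (hWle x hx))]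
    rw [hcongr, intervalIntegral.integral_add (Continuous.intervalIntegrable (by fun_prop) _ _)
      (Continuous.intervalIntegrable (by fun_prop) _ _), intervalIntegral.integral_const_mul,
      intervalIntegral.integral_sub (Continuous.intervalIntegrable (by fun_prop) _ _)
      (hcW.intervalIntegrable _ _), intervalIntegral.integral_const, smul_eq_mul]
  rw [hint, intervalIntegral.integral_const_mul] at hcal
  have hkL : k * (b - a) = π := by rw [hk]; field_simp
  have hkk : k ^ 2 * ((b - a) * δ) = 2 * (k * (π / 2 * δ)) := by
    rw [← hkL]; ring
  have := mul_le_mul_of_nonneg_left hlow hk0.le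
  rw [← div_pow, ← hk]
  nlinarith

end LogSobolevInterval

open LogSobolevInterval in
/-- Log-Sobolev inequality on an arbitrary compact interval `[a,b]`: if `f` is a
non-negative `C¹` function with root mean square `m > 0` on `[a,b]`, then
`(π²/(b−a)²) (∫ₐᵇ f² log f − (b−a) m² log m) ≤ ∫ₐᵇ f'²`. -/
theorem logSobolev_interval (a b : ℝ) (hab : a < b) (f : ℝ → ℝ) (m : ℝ)
    (hf : ContDiff ℝ 1 f)
    (hpos : ∀ x ∈ Set.Icc a b, 0 ≤ f x)
    (hm : 0 < m)
    (hnorm : (1 / (b - a)) * ∫ x in a..b, (f x) ^ 2 = m ^ 2) :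
    (π ^ 2 / (b - a) ^ 2) *
        ((∫ x in a..b, (f x) ^ 2 * Real.log (f x)) - (b - a) * m ^ 2 * Real.log m) ≤
      ∫ x in a..b, (deriv f x) ^ 2 := by
  have hL : 0 < b - a := sub_pos.2 hab
  have hI : ∫ x in a..b, (f x) ^ 2 = (b - a) * m ^ 2 := by
    rw [← hnorm]; field_simp
  obtain ⟨x₀, h₀, hmin⟩ := isCompact_Icc.exists_isMinOn (Set.nonempty_Icc.2 hab.le)
    hf.continuous.continuousOn
  obtain ⟨x₁, h₁, hmax⟩ := isCompact_Icc.exists_isMaxOn (Set.nonempty_Icc.2 hab.le)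
    hf.continuous.continuousOn
  have hβ : 0 < f x₁ := by
    refine (hpos x₁ h₁).lt_of_ne' fun h => ?_
    have h0 : ∫ x in a..b, (f x) ^ 2 = 0 := by
      have : ∫ x in a..b, (f x) ^ 2 = ∫ x in a..b, (0 : ℝ) := by
        refine intervalIntegral.integral_congr fun x hx => ?_
        rw [Set.uIcc_of_le hab.le] at hx
        have h2 : f x ≤ f x₁ := hmax hx
        have : f x = 0 := le_antisymm (h ▸ h2) (hpos x hx)
        simp [this]
      simpa using this
    rw [hI] at h0
    have : 0 < (b - a) * m ^ 2 := by positivity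
    linarith
  obtain ⟨c, hc, hle, hge, hW⟩ := exists_scale (hpos x₀ h₀) (hmin h₁) hβ
  have hg : ContDiff ℝ 1 fun x => f x / c := hf.div_const c
  have hmain := normalized hab hg h₀ h₁ (fun x hx => by have := hmin hx; gcongr; exact this)
    (fun x hx => by have := hmax hx; gcongr; exact this)
    (div_nonneg (hpos x₀ h₀) hc.le) hle hge hW
  have hder : ∫ x in a..b, (deriv (fun x => f x / c) x) ^ 2 =
      (∫ x in a..b, (deriv f x) ^ 2) / c ^ 2 := by
    rw [← intervalIntegral.integral_div]
    simp only [deriv_div_const, div_pow]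
  have hcont : Continuous fun x => (f x) ^ 2 * log (f x) :=
    continuous_sq_mul_log.comp hf.continuous
  have hfc := hf.continuous
  have hWint : ∫ x in a..b, W (f x / c) =
      ((∫ x in a..b, (f x) ^ 2 * log (f x)) - (log c + 1 / 2) * ((b - a) * m ^ 2)) / c ^ 2
        + (b - a) / 2 := by
    have hpt : ∀ x ∈ Set.uIcc a b, W (f x / c) =
        ((f x) ^ 2 * log (f x) - (log c + 1 / 2) * (f x) ^ 2) / c ^ 2 + 1 / 2 := by
      intro x hx
      rw [Set.uIcc_of_le hab.le] at hx
      unfold W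
      rcases (hpos x hx).eq_or_lt with h | h
      · norm_num [← h]
      · rw [Real.log_div h.ne' hc.ne']
        field_simp
        ring
    rw [intervalIntegral.integral_congr hpt, intervalIntegral.integral_add
      (Continuous.intervalIntegrable (by fun_prop) _ _)
      (Continuous.intervalIntegrable (by fun_prop) _ _), intervalIntegral.integral_div,
      intervalIntegral.integral_sub (hcont.intervalIntegrable _ _)
      (Continuous.intervalIntegrable (by fun_prop) _ _), intervalIntegral.integral_const_mul, hI,
      intervalIntegral.integral_const, smul_eq_mul]
    ring
  -- `W (m / c) ≥ 0` is the inequality `M log M ≥ M - 1` for the mean `M` of `(f / c)²`.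
  have hWm : 0 ≤ W (m / c) := W_nonneg (by positivity)
  have hWm' : W (m / c) = (m ^ 2 * log m - (log c + 1 / 2) * m ^ 2) / c ^ 2 + 1 / 2 := by
    unfold W
    rw [Real.log_div hm.ne' hc.ne']
    field_simp
    ring
  have hstep : ((∫ x in a..b, (f x) ^ 2 * log (f x)) - (b - a) * m ^ 2 * log m) / c ^ 2 =
      (∫ x in a..b, W (f x / c)) - (b - a) * W (m / c) := by
    rw [hWint, hWm']
    ring
  have hstep' : ((∫ x in a..b, (f x) ^ 2 * log (f x)) - (b - a) * m ^ 2 * log m) / c ^ 2 ≤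
      ∫ x in a..b, W (f x / c) := by
    rw [hstep]
    have := mul_nonneg hL.le hWm
    linarith
  have hfin := (mul_le_mul_of_nonneg_left hstep' (by positivity : 0 ≤ π ^ 2 / (b - a) ^ 2)).trans
    hmain
  rw [hder, ← mul_div_assoc] at hfin
  exact (div_le_div_iff_of_pos_right (by positivity)).1 hfin
end

section
/- Let a < b be real numbers, let f be a positive C¹ function on the interval [a,b], and let m > 0 satisfy (1/(b−a)) ∫ₐᵇ f(x) dx = m. Then (2π²/(b−a)²) · ( ∫ₐᵇ f(x) log f(x) dx − (b−a) m log m ) ≤ ∫ₐᵇ f'(x)²/f(x) dx. -/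
/-!
The sharp constant comes from the Neumann heat flow `u_t = u_xx` on `[0, π]`, to which `[a, b]` is
rescaled; there the claim reads `∫ f log f - π m log m ≤ ½ ∫ f'² / f`. Along the flow,
`½ ∫ u_x² / u - ∫ u log u` is nonincreasing. Indeed, with `v = √u`, integration by parts turns
minus its derivative into
`4 ∫ (v''² - v'²) + (1/12) ∫ u_x⁴ / u³`, and the first term is nonnegative by Wirtinger's inequality
for `v'`, which vanishes at both endpoints (`heat_dissipation_nonneg`). At `t = ∞` the solution is
the constant `m`, and comparing `t = 0` with `t = ∞` gives the inequality.

No existence theory for the heat equation is needed when `f` is a cosine polynomial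
(`cosPoly_log_sobolev`): the flow is then an explicit finite sum, positive because it is a Gaussian
average of `f` (`heat_pos`). Polynomials in `cos x` are cosine polynomials (`poly_log_sobolev`), and
a general `C¹` function is reached by Weierstrass approximation (`log_sobolev_pi`).
-/

open Real MeasureTheory intervalIntegral

/-! ### Dissipation along the heat flow -/

/-- Minus the derivative of `½ ∫ f'² / f - ∫ f log f` along the heat flow is nonnegative; here `fi`
is the `i`-th derivative of `f`. The Neumann condition is encoded as `f' = sin * r` with `r` of
class `C¹`. The integrand is `N + G'` with `N ≥ 0` and `G` vanishing at `0` and `π`; writing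
`(√f)' = sin * q`, the first term of `N` is `4 sin² q'²`, the defect in Wirtinger's inequality
`∫ (p'² - p²) = ∫ sin² q'²` for `p = sin * q`. -/
lemma heat_dissipation_nonneg (f f1 f2 f3 r r1 : ℝ → ℝ)
    (hf : ∀ x, HasDerivAt f (f1 x) x) (hf1 : ∀ x, HasDerivAt f1 (f2 x) x)
    (hf2 : ∀ x, HasDerivAt f2 (f3 x) x) (hr : ∀ x, HasDerivAt r (r1 x) x)
    (hfr : ∀ x, f1 x = sin x * r x) (hf3 : Continuous f3) (hr1 : Continuous r1)
    (hpos : ∀ x, 0 < f x) :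
    0 ≤ ∫ x in (0 : ℝ)..π, (f2 x * (log (f x) + 1) - f1 x * f3 x / f x
      + f1 x ^ 2 * f2 x / (2 * f x ^ 2)) := by
  have cf : Continuous f := continuous_iff_continuousAt.2 fun x => (hf x).continuousAt
  have cf1 : Continuous f1 := continuous_iff_continuousAt.2 fun x => (hf1 x).continuousAt
  have cf2 : Continuous f2 := continuous_iff_continuousAt.2 fun x => (hf2 x).continuousAt
  have cr : Continuous r := continuous_iff_continuousAt.2 fun x => (hr x).continuousAt
  have hne : ∀ x, f x ≠ 0 := fun x => (hpos x).ne'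
  have hf2r : ∀ x, f2 x = cos x * r x + sin x * r1 x := fun x =>
    (hf1 x).unique (by
      have := (hasDerivAt_sin x).mul (hr x)
      rwa [show sin * r = f1 from funext fun y => (hfr y).symm] at this)
  set N : ℝ → ℝ := fun x => sin x ^ 2 * (r1 x - r x * f1 x / (2 * f x)) ^ 2 / f x
    + f1 x ^ 4 / (12 * f x ^ 3) with hN
  set G : ℝ → ℝ := fun x => f1 x * (log (f x) + 1) - f1 x * f2 x / f x
    + f1 x ^ 3 / (6 * f x ^ 2) + sin x * cos x * r x ^ 2 / f x with hG
  set J : ℝ → ℝ := fun x => f2 x * (log (f x) + 1) - f1 x * f3 x / f x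
      + f1 x ^ 2 * f2 x / (2 * f x ^ 2) with hJ
  have cN : Continuous N := by
    have h1 : ∀ x, 2 * f x ≠ 0 := fun x => by simp [hne x]
    have h3 : ∀ x, 12 * f x ^ 3 ≠ 0 := fun x => by simp [hne x]
    fun_prop (disch := assumption)
  have cJ : Continuous J := by
    have h1 : ∀ x, 2 * f x ^ 2 ≠ 0 := fun x => by simp [hne x]
    fun_prop (disch := assumption)
  have hGd : ∀ x, HasDerivAt G (J x - N x) x := by
    intro x
    have hx := hne x
    have h := (((hf1 x).mul (((hf x).log hx).add_const 1)).sub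
      (((hf1 x).mul (hf2 x)).div (hf x) hx)).add
      (((hf1 x).pow 3).div (((hf x).pow 2).const_mul 6) (by simp [hx])) |>.add
      ((((hasDerivAt_sin x).mul (hasDerivAt_cos x)).mul ((hr x).pow 2)).div (hf x) hx)
    refine h.congr_deriv ?_
    simp only [hJ, hN, hf2r x, hfr x, Pi.pow_apply, Pi.mul_apply]
    field_simp
    ring_nf
  have hint : ∫ x in (0 : ℝ)..π, (J x - N x) = 0 := by
    rw [integral_eq_sub_of_hasDerivAt (fun x _ => hGd x) ((cJ.sub cN).intervalIntegrable _ _)]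
    simp [hG, hfr]
  rw [integral_sub (cJ.intervalIntegrable _ _) (cN.intervalIntegrable _ _)] at hint
  have : 0 ≤ ∫ x in (0 : ℝ)..π, N x := integral_nonneg pi_pos.le fun x _ => by
    have := hpos x
    positivity
  linarith

/-! ### Positivity of the heat flow -/

/-- The heat flow preserves positivity: with `s = exp (-v / 2)`, the evolved function at `x` is the
average of the initial one against the Gaussian law with mean `x` and variance `v`. -/
lemma heat_pos (S : Finset ℕ) (a : ℕ → ℝ) (hpos : ∀ x : ℝ, 0 < ∑ k ∈ S, a k * cos (k * x))
    (s : ℝ) (hs0 : 0 < s) (hs1 : s ≤ 1) (x : ℝ) :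
    0 < ∑ k ∈ S, a k * s ^ (k ^ 2) * cos (k * x) := by
  obtain ⟨v, hv⟩ : ∃ v : NNReal, s = exp (-(v : ℝ) / 2) :=
    ⟨⟨-2 * log s, by have := log_nonpos hs0.le hs1; linarith⟩, by
      show s = exp (-(-2 * log s) / 2)
      rw [show -(-2 * log s) / 2 = log s by ring, exp_log hs0]⟩
  have key : ∀ k : ℕ, ∫ y, cos (k * y) ∂(ProbabilityTheory.gaussianReal x v)
      = s ^ (k ^ 2) * cos (k * x) := by
    intro k
    have h := ProbabilityTheory.charFun_gaussianReal (μ := x) (v := v) (k : ℝ)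
    rw [charFun_apply_real] at h
    have h' := congrArg Complex.re h
    rw [← RCLike.re_eq_complex_re, ← integral_re] at h'
    · simp only [RCLike.re_eq_complex_re] at h'
      have e1 : ∀ y : ℝ, (Complex.exp (((k : ℝ) : ℂ) * y * Complex.I)).re = cos (k * y) := by
        intro y
        rw [← Complex.ofReal_mul, Complex.exp_ofReal_mul_I_re]
      simp only [e1] at h'
      have e2 : (((k : ℝ) : ℂ) * x * Complex.I - v * ((k : ℝ) : ℂ) ^ 2 / 2)
          = (((k ^ 2 : ℕ) * (-(v : ℝ) / 2) : ℝ) : ℂ) + ((k * x : ℝ) : ℂ) * Complex.I := by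
        push_cast; ring
      rw [h', e2, Complex.exp_add, ← Complex.ofReal_exp, Complex.re_ofReal_mul,
        Complex.exp_ofReal_mul_I_re, exp_nat_mul, ← hv]
    · refine Integrable.of_bound (C := 1) (by fun_prop) (.of_forall fun y => ?_)
      rw [← Complex.ofReal_mul, Complex.norm_exp_ofReal_mul_I]
  have hi : ∀ k : ℕ, Integrable (fun y : ℝ => cos (k * y)) (ProbabilityTheory.gaussianReal x v) :=
    fun k => Integrable.of_bound (C := 1) (by fun_prop) (.of_forall fun y => by
      simpa using abs_cos_le_one _)
  have hsum : ∑ k ∈ S, a k * s ^ (k ^ 2) * cos (k * x)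
      = ∫ y, (∑ k ∈ S, a k * cos (k * y)) ∂(ProbabilityTheory.gaussianReal x v) := by
    rw [integral_finsetSum _ fun k _ => (hi k).const_mul _]
    refine Finset.sum_congr rfl fun k _ => ?_
    rw [MeasureTheory.integral_const_mul, key, mul_assoc]
  rw [hsum, integral_pos_iff_support_of_nonneg (fun y => (hpos y).le)
    (integrable_finsetSum _ fun k _ => (hi k).const_mul _)]
  rw [show Function.support (fun y : ℝ => ∑ k ∈ S, a k * cos (k * y)) = Set.univ from
    Set.eq_univ_of_forall fun y => (hpos y).ne']
  simp

/-! ### Cosine polynomials -/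

/-- The inequality on `[0, π]` for positive cosine polynomials. The heat flow is
`F s x = ∑ aₖ s^(k²) cos (k x)` with `s = exp (-t)`, so that equilibrium `t = ∞` is the ordinary
point `s = 0` and `s ∂ₛF = -∂ₓ²F`. The functional `∫ (F log F - F_x² / (2F))` is nonincreasing in
`s ∈ [0, 1]`, which compares the given function (`s = 1`) with its mean (`s = 0`). -/
lemma cosPoly_log_sobolev (S : Finset ℕ) (a : ℕ → ℝ) (m : ℝ) (hm : 0 < m)
    (hpos : ∀ x : ℝ, 0 < ∑ k ∈ S, a k * cos (k * x))
    (hmean : ∫ x in (0 : ℝ)..π, ∑ k ∈ S, a k * cos (k * x) = π * m) :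
    ∫ x in (0 : ℝ)..π, ((∑ k ∈ S, a k * cos (k * x)) * log (∑ k ∈ S, a k * cos (k * x))
      - (∑ k ∈ S, a k * (-(k * sin (k * x)))) ^ 2 / (2 * ∑ k ∈ S, a k * cos (k * x)))
      ≤ π * (m * log m) := by
  set F : ℝ → ℝ → ℝ := fun s x => ∑ k ∈ S, a k * s ^ (k ^ 2) * cos (k * x) with hF
  set F1 : ℝ → ℝ → ℝ := fun s x => ∑ k ∈ S, a k * s ^ (k ^ 2) * (-(k * sin (k * x))) with hF1
  set F2 : ℝ → ℝ → ℝ := fun s x => ∑ k ∈ S, a k * s ^ (k ^ 2) * (-(k ^ 2 * cos (k * x))) with hF2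
  set F3 : ℝ → ℝ → ℝ := fun s x => ∑ k ∈ S, a k * s ^ (k ^ 2) * (k ^ 3 * sin (k * x)) with hF3
  set Fs : ℝ → ℝ → ℝ := fun s x =>
    ∑ k ∈ S, a k * ((k ^ 2 : ℕ) * s ^ (k ^ 2 - 1)) * cos (k * x) with hFs
  set F1s : ℝ → ℝ → ℝ := fun s x =>
    ∑ k ∈ S, a k * ((k ^ 2 : ℕ) * s ^ (k ^ 2 - 1)) * (-(k * sin (k * x))) with hF1s
  -- `k ^ 2 - 1` truncates at `k = 0`, where the factor `k ^ 2` vanishes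
  have hpw : ∀ (k : ℕ) (s : ℝ), s * ((k ^ 2 : ℕ) * s ^ (k ^ 2 - 1)) = k ^ 2 * s ^ (k ^ 2) := by
    intro k s
    rcases Nat.eq_zero_or_pos (k ^ 2) with h | h
    · have : k = 0 := by simpa using h
      simp [this]
    · obtain ⟨j, hj⟩ := Nat.exists_eq_succ_of_ne_zero h.ne'
      have : (k : ℝ) ^ 2 = (k ^ 2 : ℕ) := by push_cast; rfl
      rw [this, hj, Nat.succ_sub_one, pow_succ]; ring
  have hsFs : ∀ s x, s * Fs s x = -F2 s x := fun s x => by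
    simp only [hFs, hF2, Finset.mul_sum, ← Finset.sum_neg_distrib]
    exact Finset.sum_congr rfl fun k _ => by linear_combination (a k * cos (k * x)) * hpw k s
  have hsF1s : ∀ s x, s * F1s s x = -F3 s x := fun s x => by
    simp only [hF1s, hF3, Finset.mul_sum, ← Finset.sum_neg_distrib]
    exact Finset.sum_congr rfl fun k _ => by
      linear_combination (-(a k * k * sin (k * x))) * hpw k s
  have hcos : ∀ (k : ℕ) (x : ℝ), HasDerivAt (fun x : ℝ => cos (k * x)) (-(k * sin (k * x))) x :=
    fun k x => (((hasDerivAt_id x).const_mul (k : ℝ)).cos).congr_deriv (by simp; ring)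
  have hsin : ∀ (k : ℕ) (x : ℝ), HasDerivAt (fun x : ℝ => sin (k * x)) (k * cos (k * x)) x :=
    fun k x => (((hasDerivAt_id x).const_mul (k : ℝ)).sin).congr_deriv (by simp; ring)
  have dF : ∀ s x, HasDerivAt (F s) (F1 s x) x := fun s x =>
    HasDerivAt.fun_sum fun k _ => (hcos k x).const_mul _
  have dF1 : ∀ s x, HasDerivAt (F1 s) (F2 s x) x := fun s x =>
    HasDerivAt.fun_sum fun k _ => ((((hsin k x).const_mul (k : ℝ)).fun_neg).const_mul _).congr_deriv
      (by ring)
  have dF2 : ∀ s x, HasDerivAt (F2 s) (F3 s x) x := fun s x =>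
    HasDerivAt.fun_sum fun k _ =>
      ((((hcos k x).const_mul ((k : ℝ) ^ 2)).fun_neg).const_mul _).congr_deriv (by ring)
  have dFs : ∀ s x, HasDerivAt (fun s => F s x) (Fs s x) s := fun s x =>
    HasDerivAt.fun_sum fun k _ => ((hasDerivAt_pow (k ^ 2) s).const_mul (a k)).mul_const _
  have dF1s : ∀ s x, HasDerivAt (fun s => F1 s x) (F1s s x) s := fun s x =>
    HasDerivAt.fun_sum fun k _ => ((hasDerivAt_pow (k ^ 2) s).const_mul (a k)).mul_const _
  have hF0 : ∀ x, F 0 x = m := by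
    have h1 : ∀ x, F 0 x = ∑ k ∈ S, if k = 0 then a k else 0 := fun x =>
      Finset.sum_congr rfl fun k _ => by
        by_cases hk : k = 0 <;> simp [hk]
    have h2 : ∀ k : ℕ, ∫ x in (0 : ℝ)..π, a k * cos (k * x) = π * if k = 0 then a k else 0 := by
      intro k
      by_cases hk : k = 0
      · simp [hk]
      · have hk' : (k : ℝ) ≠ 0 := by exact_mod_cast hk
        rw [intervalIntegral.integral_const_mul, intervalIntegral.integral_comp_mul_left _ hk']
        simp [hk]
    rw [integral_finsetSum fun k _ => Continuous.intervalIntegrable (by fun_prop) _ _,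
      Finset.sum_congr rfl fun k _ => h2 k, ← Finset.mul_sum] at hmean
    intro x
    rw [h1]
    exact mul_left_cancel₀ pi_ne_zero hmean
  have hFpos : ∀ s ∈ Set.Icc (0 : ℝ) 1, ∀ x, 0 < F s x := by
    intro s hs x
    rcases hs.1.eq_or_lt with h | h
    · rw [← h, hF0]; exact hm
    · exact heat_pos S a hpos s h hs.2 x
  have hF10 : ∀ x, F1 0 x = 0 := fun x => Finset.sum_eq_zero fun k _ => by
    by_cases hk : k = 0 <;> simp [hk]
  set D : ℝ → ℝ → ℝ := fun s x => Fs s x * (log (F s x) + 1) - F1 s x * F1s s x / F s x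
    + F1 s x ^ 2 * Fs s x / (2 * F s x ^ 2) with hD
  set φ : ℝ → ℝ → ℝ := fun s x => F s x * log (F s x) - F1 s x ^ 2 / (2 * F s x) with hφ
  have dφ : ∀ s ∈ Set.Icc (0 : ℝ) 1, ∀ x, HasDerivAt (fun s => φ s x) (D s x) s := by
    intro s hs x
    have hx := (hFpos s hs x).ne'
    have h := ((dFs s x).mul ((dFs s x).log hx)).sub
      (((dF1s s x).pow 2).div ((dFs s x).const_mul 2) (by simpa using hx))
    refine h.congr_deriv ?_
    simp only [hD, Pi.pow_apply]
    field_simp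
    ring
  have cD : ContinuousOn D.uncurry (Set.Icc 0 1 ×ˢ Set.univ) := by
    have c0 : Continuous fun p : ℝ × ℝ => F p.1 p.2 := by simp only [hF]; fun_prop
    have c1 : Continuous fun p : ℝ × ℝ => F1 p.1 p.2 := by simp only [hF1]; fun_prop
    have c2 : Continuous fun p : ℝ × ℝ => Fs p.1 p.2 := by simp only [hFs]; fun_prop
    have c3 : Continuous fun p : ℝ × ℝ => F1s p.1 p.2 := by simp only [hF1s]; fun_prop
    have hne : ∀ p ∈ Set.Icc (0 : ℝ) 1 ×ˢ (Set.univ : Set ℝ), F p.1 p.2 ≠ 0 := fun p hp =>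
      (hFpos p.1 hp.1 p.2).ne'
    have e0 := c0.continuousOn (s := Set.Icc (0 : ℝ) 1 ×ˢ (Set.univ : Set ℝ))
    have e1 := c1.continuousOn (s := Set.Icc (0 : ℝ) 1 ×ˢ (Set.univ : Set ℝ))
    have e2 := c2.continuousOn (s := Set.Icc (0 : ℝ) 1 ×ˢ (Set.univ : Set ℝ))
    have e3 := c3.continuousOn (s := Set.Icc (0 : ℝ) 1 ×ˢ (Set.univ : Set ℝ))
    exact ((e2.mul ((e0.log hne).add continuousOn_const)).sub ((e1.mul e3).div e0 hne)).add
      (((e1.pow 2).mul e2).div (continuousOn_const.mul (e0.pow 2)) fun p hp => by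
        simpa using hne p hp)
  have hDs : ∀ x, IntervalIntegrable (fun s => D s x) volume 0 1 := fun x => by
    refine ContinuousOn.intervalIntegrable ?_
    rw [Set.uIcc_of_le zero_le_one]
    exact cD.comp (f := fun s => (s, x)) (by fun_prop) fun s hs => ⟨hs, trivial⟩
  have hφx : ∀ x, φ 1 x - φ 0 x = ∫ s in (0 : ℝ)..1, D s x := fun x => by
    rw [integral_eq_sub_of_hasDerivAt (fun s hs => dφ s (by simpa using hs) x) (hDs x)]
  have cφ : ∀ s ∈ Set.Icc (0 : ℝ) 1, Continuous (φ s) := fun s hs => by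
    have c0 : Continuous (F s) := by simp only [hF]; fun_prop
    have c1 : Continuous (F1 s) := by simp only [hF1]; fun_prop
    exact (c0.mul (c0.log fun x => (hFpos s hs x).ne')).sub
      ((c1.pow 2).div (continuous_const.mul c0) fun x => by simpa using (hFpos s hs x).ne')
  have hneg : ∀ s ∈ Set.Icc (0 : ℝ) 1, s ≠ 0 → ∫ x in (0 : ℝ)..π, D s x ≤ 0 := by
    intro s hs hs0
    have hs' : 0 < s := lt_of_le_of_ne hs.1 (Ne.symm hs0)
    -- `F_x / sin x` is smooth because `sin (k x) / sin x` is a Chebyshev polynomial in `cos x`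
    obtain ⟨r, r1, hr, hr1, hfr⟩ : ∃ r r1 : ℝ → ℝ, (∀ x, HasDerivAt r (r1 x) x) ∧ Continuous r1 ∧
        ∀ x, F1 s x = sin x * r x := by
      let Q : Polynomial ℝ := ∑ k ∈ S, Polynomial.C (-(a k * s ^ (k ^ 2) * k)) *
        Polynomial.Chebyshev.U ℝ ((k : ℤ) - 1)
      refine ⟨fun x => Q.eval (cos x), fun x => Q.derivative.eval (cos x) * (-sin x),
        fun x => (Q.hasDerivAt _).comp x (hasDerivAt_cos x), by fun_prop, fun x => ?_⟩
      simp only [hF1, Q, Polynomial.eval_finsetSum, Finset.mul_sum]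
      refine Finset.sum_congr rfl fun k _ => ?_
      have := Polynomial.Chebyshev.U_real_cos x ((k : ℤ) - 1)
      push_cast at this
      rw [sub_add_cancel] at this
      rw [← this]
      simp only [Polynomial.eval_mul, Polynomial.eval_C]
      ring
    have h := heat_dissipation_nonneg (F s) (F1 s) (F2 s) (F3 s) r r1 (dF s) (dF1 s) (dF2 s) hr hfr
      (by simp only [hF3]; fun_prop) hr1 (hFpos s hs)
    have e : ∀ x, F2 s x * (log (F s x) + 1) - F1 s x * F3 s x / F s x
      + F1 s x ^ 2 * F2 s x / (2 * F s x ^ 2) = (-s) * D s x := fun x => by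
      rw [show F2 s x = -(s * Fs s x) by rw [hsFs]; ring,
        show F3 s x = -(s * F1s s x) by rw [hsF1s]; ring]
      simp only [hD]
      ring
    simp only [e] at h
    rw [intervalIntegral.integral_const_mul] at h
    by_contra hc
    have := mul_pos hs' (not_le.1 hc)
    linarith
  have hswap : ∫ x in (0 : ℝ)..π, ∫ s in (0 : ℝ)..1, D s x
      = ∫ s in (0 : ℝ)..1, ∫ x in (0 : ℝ)..π, D s x := by
    refine (intervalIntegral_intervalIntegral_swap ?_).symm
    rw [Set.uIoc_of_le zero_le_one, Set.uIoc_of_le pi_pos.le]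
    refine IntegrableOn.mono_set (t := Set.Icc 0 1 ×ˢ Set.Icc 0 π) ?_
      (Set.prod_mono Set.Ioc_subset_Icc_self Set.Ioc_subset_Icc_self)
    exact (cD.mono (Set.prod_mono subset_rfl (Set.subset_univ _))).integrableOn_compact
      (isCompact_Icc.prod isCompact_Icc)
  have hle : ∫ x in (0 : ℝ)..π, (φ 1 x - φ 0 x) ≤ 0 := by
    simp only [hφx]
    rw [hswap, intervalIntegral.integral_of_le zero_le_one]
    exact setIntegral_nonpos measurableSet_Ioc fun s hs =>
      hneg s ⟨hs.1.le, hs.2⟩ hs.1.ne'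
  rw [integral_sub ((cφ 1 (by simp)).intervalIntegrable _ _)
    ((cφ 0 (by simp)).intervalIntegrable _ _)] at hle
  have h0 : ∫ x in (0 : ℝ)..π, φ 0 x = π * (m * log m) := by
    simp only [hφ, hF0, hF10]
    simp
    ring
  have h1 : ∫ x in (0 : ℝ)..π, φ 1 x = ∫ x in (0 : ℝ)..π,
      ((∑ k ∈ S, a k * cos (k * x)) * log (∑ k ∈ S, a k * cos (k * x))
      - (∑ k ∈ S, a k * (-(k * sin (k * x)))) ^ 2 / (2 * ∑ k ∈ S, a k * cos (k * x))) := by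
    simp only [hφ, hF, hF1, one_pow, mul_one]
  linarith

lemma poly_cos_eq_sum (Q : Polynomial ℝ) : ∃ (S : Finset ℕ) (a : ℕ → ℝ), ∀ x : ℝ,
    Q.eval (cos x) = ∑ k ∈ S, a k * cos (k * x) := by
  have key : (fun x : ℝ => Q.eval (cos x)) ∈
      Submodule.span ℝ (Set.range fun (k : ℕ) (x : ℝ) => cos (k * x)) := by
    induction Q using Polynomial.induction_on with
    | C c =>
      rw [show (fun x : ℝ => (Polynomial.C c).eval (cos x)) =
        c • (fun x : ℝ => cos ((0 : ℕ) * x)) by ext x; simp]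
      exact Submodule.smul_mem _ _ (Submodule.subset_span ⟨0, rfl⟩)
    | add p q hp hq =>
      simp only [Polynomial.eval_add]
      exact Submodule.add_mem _ hp hq
    | monomial n c ih =>
      have hmul : ∀ g ∈ Submodule.span ℝ (Set.range fun (k : ℕ) (x : ℝ) => cos (k * x)),
          (fun x => cos x * g x) ∈
            Submodule.span ℝ (Set.range fun (k : ℕ) (x : ℝ) => cos (k * x)) := by
        intro g hg
        induction hg using Submodule.span_induction with
        | mem g hg =>
          obtain ⟨k, rfl⟩ := hg
          rcases k with _ | k
          · exact Submodule.subset_span ⟨1, by simp⟩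
          · rw [show (fun x : ℝ => cos x * cos ((k + 1 : ℕ) * x)) =
              (1 / 2 : ℝ) • ((fun x : ℝ => cos ((k + 2 : ℕ) * x)) + fun x : ℝ => cos (k * x)) by
                ext x
                have h1 : cos (((k + 2 : ℕ) : ℝ) * x) = cos ((k + 1 : ℕ) * x + x) := by
                  congr 1; push_cast; ring
                have h2 : cos ((k : ℝ) * x) = cos ((k + 1 : ℕ) * x - x) := by
                  congr 1; push_cast; ring
                simp only [Pi.smul_apply, Pi.add_apply, h1, h2, cos_add, cos_sub, smul_eq_mul]
                ring]
            exact Submodule.smul_mem _ _ (Submodule.add_mem _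
              (Submodule.subset_span ⟨k + 2, rfl⟩) (Submodule.subset_span ⟨k, rfl⟩))
        | zero =>
          simp only [Pi.zero_apply, mul_zero]
          exact Submodule.zero_mem _
        | add g h _ _ hg hh =>
          simp only [Pi.add_apply, mul_add]
          exact Submodule.add_mem _ hg hh
        | smul c g _ hg =>
          have := Submodule.smul_mem _ c hg
          convert this using 1
          ext x
          simp only [Pi.smul_apply, smul_eq_mul]; ring
      convert hmul _ ih using 1
      ext x
      simp only [Polynomial.eval_mul, Polynomial.eval_C, Polynomial.eval_pow, Polynomial.eval_X]
      ring
  obtain ⟨c, hc⟩ := Finsupp.mem_span_range_iff_exists_finsupp.1 key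
  refine ⟨c.support, c, fun x => ?_⟩
  rw [← congrFun hc x]
  simp [Finsupp.sum]

/-- The form of `cosPoly_log_sobolev` in the variable `cos x`. -/
lemma poly_log_sobolev (Q : Polynomial ℝ) (m : ℝ) (hm : 0 < m)
    (hpos : ∀ x : ℝ, 0 < Q.eval (cos x))
    (hmean : ∫ x in (0 : ℝ)..π, Q.eval (cos x) = π * m) :
    ∫ x in (0 : ℝ)..π, (Q.eval (cos x) * log (Q.eval (cos x))
      - (sin x * Q.derivative.eval (cos x)) ^ 2 / (2 * Q.eval (cos x))) ≤ π * (m * log m) := by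
  obtain ⟨S, a, h⟩ := poly_cos_eq_sum Q
  have hd : ∀ x : ℝ, (sin x * Q.derivative.eval (cos x)) ^ 2
      = (∑ k ∈ S, a k * (-(k * sin (k * x)))) ^ 2 := by
    intro x
    have h1 := (Q.hasDerivAt (cos x)).comp x (hasDerivAt_cos x)
    rw [show (fun y => Q.eval y) ∘ cos = fun x : ℝ => ∑ k ∈ S, a k * cos (k * x) from
      funext h] at h1
    have h2 : HasDerivAt (fun x : ℝ => ∑ k ∈ S, a k * cos (k * x))
        (∑ k ∈ S, a k * (-(k * sin (k * x)))) x :=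
      HasDerivAt.fun_sum fun k _ => ((((hasDerivAt_id x).const_mul (k : ℝ)).cos).congr_deriv
        (by simp; ring)).const_mul _
    rw [← h1.unique h2]
    ring
  simp only [hd, h] at *
  exact cosPoly_log_sobolev S a m hm hpos hmean

/-! ### Approximation of `C¹` functions -/

lemma exists_derivative_eq (p : Polynomial ℝ) : ∃ P : Polynomial ℝ, P.derivative = p := by
  induction p using Polynomial.induction_on with
  | C c => exact ⟨Polynomial.C c * Polynomial.X, by simp⟩
  | add p q hp hq =>
    obtain ⟨P, rfl⟩ := hp
    obtain ⟨R, rfl⟩ := hq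
    exact ⟨P + R, Polynomial.derivative_add⟩
  | monomial n c _ =>
    have hn : (n : ℝ) + 1 + 1 ≠ 0 := by positivity
    refine ⟨Polynomial.C (c / (n + 1 + 1)) * Polynomial.X ^ (n + 1 + 1), ?_⟩
    rw [Polynomial.derivative_C_mul_X_pow]
    push_cast
    rw [div_mul_cancel₀ _ hn]

open Filter Topology in
/-- The sharp inequality on `[0, π]`, by density. Dividing `f'` by `max (sin x) ε` instead of
`sin x` keeps the quotient continuous, so Weierstrass in the variable `cos x` gives polynomials `Q`
whose derivatives `(Q ∘ cos)'` are uniformly bounded and tend to `f'` on `(0, π)`, although they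
vanish at the endpoints. -/
lemma log_sobolev_pi (f : ℝ → ℝ) (m : ℝ) (hf : ContDiff ℝ 1 f)
    (hpos : ∀ x ∈ Set.Icc 0 π, 0 < f x) (hm : 0 < m)
    (hmean : ∫ x in (0 : ℝ)..π, f x = π * m) :
    ∫ x in (0 : ℝ)..π, (f x * log (f x) - deriv f x ^ 2 / (2 * f x)) ≤ π * (m * log m) := by
  have ch : Continuous (deriv f) := hf.continuous_deriv le_rfl
  have cf : Continuous f := hf.continuous
  have hdf : ∀ x, HasDerivAt f (deriv f x) x := fun x =>
    (hf.differentiable one_ne_zero x).hasDerivAt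
  set ε : ℕ → ℝ := fun n => 1 / ((n : ℝ) + 1) with hε
  have hε0 : ∀ n, 0 < ε n := fun n => by simp only [hε]; positivity
  have hε1 : ∀ n, ε n ≤ 1 := fun n => by
    simp only [hε]; rw [div_le_one (by positivity)]; linarith [n.cast_nonneg (α := ℝ)]
  have hεlim : Tendsto ε atTop (𝓝 0) := tendsto_one_div_add_atTop_nhds_zero_nat
  -- `f' / max sin (ε n)`, in the variable `cos x`, is approximated by a polynomial `p`, and
  -- `Q` is an antiderivative of `-p`, so that `(Q ∘ cos)' = sin * (p ∘ cos)`
  have hmax : ∀ n x, 0 < max (sin x) (ε n) := fun n x => lt_max_of_lt_right (hε0 n)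
  have hex : ∀ n, ∃ Q : Polynomial ℝ, Q.eval 1 = f 0 ∧ ∀ x ∈ Set.Icc 0 π,
      |-sin x * Q.derivative.eval (cos x) - deriv f x * (sin x / max (sin x) (ε n))| ≤ ε n := by
    intro n
    obtain ⟨p, hp⟩ := exists_polynomial_near_of_continuousOn (-1) 1
      (fun y => deriv f (arccos y) / max (sin (arccos y)) (ε n))
      (Continuous.continuousOn ((ch.comp continuous_arccos).div (by fun_prop)
        fun y => (hmax n _).ne')) (ε n) (hε0 n)
    obtain ⟨P, hP⟩ := exists_derivative_eq (-p)
    refine ⟨Polynomial.C (f 0 - P.eval 1) + P, by simp, fun x hx => ?_⟩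
    have h := hp (cos x) ⟨neg_one_le_cos x, cos_le_one x⟩
    rw [arccos_cos hx.1 hx.2] at h
    have hs := sin_nonneg_of_mem_Icc hx
    simp only [Polynomial.derivative_add, Polynomial.derivative_C, zero_add, hP,
      Polynomial.eval_neg]
    rw [show -sin x * -p.eval (cos x) - deriv f x * (sin x / max (sin x) (ε n))
      = sin x * (p.eval (cos x) - deriv f x / max (sin x) (ε n)) by ring, abs_mul, abs_of_nonneg hs]
    calc _ ≤ 1 * ε n := mul_le_mul (sin_le_one x) h.le (abs_nonneg _) zero_le_one
      _ = ε n := one_mul _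
  choose Q hQ1 hQ using hex
  set F : ℕ → ℝ → ℝ := fun n x => (Q n).eval (cos x) with hF
  set g : ℕ → ℝ → ℝ := fun n x => -sin x * (Q n).derivative.eval (cos x) with hg
  have dF : ∀ n x, HasDerivAt (F n) (g n x) x := fun n x =>
    (((Q n).hasDerivAt _).comp x (hasDerivAt_cos x)).congr_deriv (by simp only [hg]; ring)
  have cF : ∀ n, Continuous (F n) := fun n => by simp only [hF]; fun_prop
  have cg : ∀ n, Continuous (g n) := fun n => by simp only [hg]; fun_prop
  obtain ⟨M, hM⟩ := isCompact_Icc.exists_bound_of_continuousOn (s := Set.Icc 0 π) ch.continuousOn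
  have hgM : ∀ n, ∀ x ∈ Set.Icc 0 π, |g n x| ≤ M + 1 := by
    intro n x hx
    have h1 := hQ n x hx
    have h2 : |deriv f x * (sin x / max (sin x) (ε n))| ≤ M * 1 := by
      rw [abs_mul]
      have hs := sin_nonneg_of_mem_Icc hx
      refine mul_le_mul (hM x hx) ?_ (abs_nonneg _) ((norm_nonneg _).trans (hM x hx))
      rw [abs_of_nonneg (div_nonneg hs (hmax n x).le)]
      exact div_le_one_of_le₀ (le_max_left _ _) (hmax n x).le
    have h3 := abs_add_le (g n x - deriv f x * (sin x / max (sin x) (ε n)))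
      (deriv f x * (sin x / max (sin x) (ε n)))
    rw [sub_add_cancel] at h3
    linarith [hε1 n]
  have hglim : ∀ x ∈ Set.Ioo 0 π, Tendsto (fun n => g n x) atTop (𝓝 (deriv f x)) := by
    intro x hx
    have hs := sin_pos_of_mem_Ioo hx
    have hz : Tendsto (fun n => g n x - deriv f x * (sin x / max (sin x) (ε n))) atTop (𝓝 0) :=
      squeeze_zero_norm (fun n => hQ n x ⟨hx.1.le, hx.2.le⟩) hεlim
    have hev : ∀ᶠ n in atTop, g n x - deriv f x * (sin x / max (sin x) (ε n))
        = g n x - deriv f x := by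
      filter_upwards [hεlim.eventually_lt_const hs] with n hn
      rw [max_eq_left hn.le, div_self hs.ne', mul_one]
    have := (hz.congr' hev).add_const (deriv f x)
    simpa using this
  have hae : ∀ᵐ x : ℝ, x ∈ Set.uIoc 0 π → x ∈ Set.Ioo 0 π := by
    have : ∀ᵐ x : ℝ, x ≠ π := by simp [ae_iff]
    filter_upwards [this] with x hx hx'
    rw [Set.uIoc_of_le pi_pos.le] at hx'
    exact ⟨hx'.1, lt_of_le_of_ne hx'.2 hx⟩
  have hIcc : ∀ x ∈ Set.uIoc 0 π, x ∈ Set.Icc 0 π := fun x hx => by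
    rw [Set.uIoc_of_le pi_pos.le] at hx
    exact ⟨hx.1.le, hx.2⟩
  -- convergence of the derivatives in `L¹` makes `F n → f` uniform on `[0, π]`
  set E : ℕ → ℝ := fun n => ∫ x in (0 : ℝ)..π, |g n x - deriv f x| with hE
  have hElim : Tendsto E atTop (𝓝 0) := by
    have : Tendsto E atTop (𝓝 (∫ x in (0 : ℝ)..π, (0 : ℝ))) := by
      refine tendsto_integral_filter_of_dominated_convergence (fun _ => (M + 1) + M)
        (.of_forall fun n => ((cg n).sub ch).abs.aestronglyMeasurable)
        (.of_forall fun n => .of_forall fun x hx => ?_) intervalIntegrable_const ?_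
      · rw [norm_eq_abs, abs_abs]
        exact (abs_sub _ _).trans (add_le_add (hgM n x (hIcc x hx)) (hM x (hIcc x hx)))
      · filter_upwards [hae] with x hx hx'
        have := ((hglim x (hx hx')).sub_const (deriv f x)).abs
        simpa using this
    simpa using this
  have hFE : ∀ n, ∀ x ∈ Set.Icc 0 π, |F n x - f x| ≤ E n := by
    intro n x hx
    have h1 : ∫ t in (0 : ℝ)..x, (g n t - deriv f t) = F n x - f x := by
      rw [integral_eq_sub_of_hasDerivAt (fun t _ => (dF n t).sub (hdf t))
        (((cg n).sub ch).intervalIntegrable _ _)]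
      simp [hF, hQ1]
    rw [← h1]
    refine (abs_integral_le_integral_abs hx.1).trans ?_
    exact integral_mono_interval le_rfl hx.1 hx.2 (.of_forall fun t => abs_nonneg _)
      (((cg n).sub ch).abs.intervalIntegrable _ _)
  have hFlim : ∀ x ∈ Set.Icc 0 π, Tendsto (fun n => F n x) atTop (𝓝 (f x)) := fun x hx => by
    rw [tendsto_iff_norm_sub_tendsto_zero]
    exact squeeze_zero (fun _ => norm_nonneg _) (fun n => hFE n x hx) hElim
  obtain ⟨x₀, hx₀, hmin⟩ := isCompact_Icc.exists_isMinOn (Set.nonempty_Icc.2 pi_pos.le)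
    cf.continuousOn
  obtain ⟨K, hK⟩ := isCompact_Icc.exists_bound_of_continuousOn (s := Set.Icc 0 π) cf.continuousOn
  set δ := f x₀ / 2 with hδ
  have hδ0 : 0 < δ := half_pos (hpos x₀ hx₀)
  have hev : ∀ᶠ n in atTop, ∀ x ∈ Set.Icc 0 π, F n x ∈ Set.Icc δ (K + δ) := by
    filter_upwards [hElim.eventually_lt_const hδ0] with n hn x hx
    have h1 := abs_le.1 (hFE n x hx)
    have h2 : f x₀ ≤ f x := hmin hx
    have h3 := (le_abs_self _).trans (hK x hx)
    constructor <;> linarith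
  obtain ⟨L, hL⟩ := isCompact_Icc.exists_bound_of_continuousOn (s := Set.Icc δ (K + δ))
    (f := fun z => z * log z) continuous_mul_log.continuousOn
  have lim1 : Tendsto (fun n => ∫ x in (0 : ℝ)..π, (F n x * log (F n x) - g n x ^ 2 / (2 * F n x)))
      atTop (𝓝 (∫ x in (0 : ℝ)..π, (f x * log (f x) - deriv f x ^ 2 / (2 * f x)))) := by
    refine tendsto_integral_filter_of_dominated_convergence
      (fun _ => L + (M + 1) ^ 2 / (2 * δ)) ?_ ?_ intervalIntegrable_const ?_
    · refine .of_forall fun n => Measurable.aestronglyMeasurable ?_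
      have h1 := (cF n).measurable
      have h2 := (cg n).measurable
      fun_prop
    · filter_upwards [hev] with n hn
      refine .of_forall fun x hx => ?_
      have h1 := hn x (hIcc x hx)
      have h2 := hgM n x (hIcc x hx)
      refine (norm_sub_le _ _).trans (add_le_add (hL _ h1) ?_)
      have h4 : 0 < F n x := hδ0.trans_le h1.1
      rw [norm_eq_abs, abs_of_nonneg (by positivity), ← sq_abs (g n x)]
      have h3 := h1.1
      gcongr
    · filter_upwards [hae] with x hx hx'
      have hx2 := hIcc x hx'
      have hne := (hpos x hx2).ne'
      exact ((hFlim x hx2).mul ((hFlim x hx2).log hne)).sub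
        (((hglim x (hx hx')).pow 2).div ((hFlim x hx2).const_mul 2) (by simpa using hne))
  have lim2 : Tendsto (fun n => (∫ x in (0 : ℝ)..π, F n x) / π) atTop (𝓝 m) := by
    have : Tendsto (fun n => ∫ x in (0 : ℝ)..π, F n x) atTop (𝓝 (∫ x in (0 : ℝ)..π, f x)) := by
      refine tendsto_integral_filter_of_dominated_convergence (fun _ => K + δ)
        (.of_forall fun n => (cF n).aestronglyMeasurable) ?_ intervalIntegrable_const ?_
      · filter_upwards [hev] with n hn
        refine .of_forall fun x hx => ?_
        have h1 := hn x (hIcc x hx)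
        rw [norm_eq_abs, abs_of_nonneg (hδ0.le.trans h1.1)]
        exact h1.2
      · exact .of_forall fun x hx => hFlim x (hIcc x hx)
    have h := this.div_const π
    rwa [hmean, mul_div_cancel_left₀ _ pi_ne_zero] at h
  have lim3 := (lim2.mul (lim2.log hm.ne')).const_mul π
  refine le_of_tendsto_of_tendsto lim1 lim3 ?_
  filter_upwards [hev, lim2.eventually_const_lt hm] with n hn hmn
  have h := poly_log_sobolev (Q n) _ hmn (fun x => by
    have h1 := hn (arccos (cos x)) ⟨arccos_nonneg _, arccos_le_pi _⟩
    simp only [hF, cos_arccos (neg_one_le_cos x) (cos_le_one x)] at h1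
    exact hδ0.trans_le h1.1) (mul_div_cancel₀ _ pi_ne_zero).symm
  simpa only [hg, neg_mul, neg_sq] using h

/-! ### General intervals -/

/-- Entropy form of the log-Sobolev inequality on a compact interval `[a,b]`:
if `f` is a positive `C¹` function with mean `m > 0` on `[a,b]`, then
`(2π²/(b−a)²) (∫ₐᵇ f log f − (b−a) m log m) ≤ ∫ₐᵇ f'²/f`. -/
theorem logSobolev_entropy_interval (a b : ℝ) (hab : a < b) (f : ℝ → ℝ) (m : ℝ)
    (hf : ContDiff ℝ 1 f)
    (hpos : ∀ x ∈ Set.Icc a b, 0 < f x)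
    (hm : 0 < m)
    (hmean : (1 / (b - a)) * ∫ x in a..b, f x = m) :
    (2 * π ^ 2 / (b - a) ^ 2) *
        ((∫ x in a..b, f x * Real.log (f x)) - (b - a) * m * Real.log m) ≤
      ∫ x in a..b, (deriv f x) ^ 2 / f x := by
  have hba : 0 < b - a := sub_pos.2 hab
  have hpi := pi_pos
  set c : ℝ := (b - a) / π with hc
  have hc0 : 0 < c := by positivity
  have hcπ : c * π = b - a := div_mul_cancel₀ _ pi_ne_zero
  have hsub : ∀ φ : ℝ → ℝ, ∫ x in (0 : ℝ)..π, φ (a + c * x) = c⁻¹ * ∫ x in a..b, φ x := by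
    intro φ
    rw [intervalIntegral.integral_comp_add_mul _ hc0.ne', hcπ]
    simp
  have hd : ∀ x, deriv (fun x => f (a + c * x)) x = c * deriv f (a + c * x) := fun x => by
    have h1 := (hf.differentiable one_ne_zero (a + c * x)).hasDerivAt
    have h2 : HasDerivAt (fun x : ℝ => a + c * x) c x :=
      (((hasDerivAt_id x).const_mul c).const_add a).congr_deriv (mul_one c)
    exact (h1.comp x h2).deriv.trans (mul_comm _ _)
  have hfI : ∫ x in a..b, f x = (b - a) * m := by
    rw [← hmean]; field_simp
  have key := log_sobolev_pi (fun x => f (a + c * x)) m (hf.comp (by fun_prop))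
    (fun x hx => hpos _ ⟨by have := mul_nonneg hc0.le hx.1; linarith, by
      have := mul_le_mul_of_nonneg_left hx.2 hc0.le; linarith⟩) hm (by
      rw [hsub f, hfI, ← hcπ]; field_simp)
  simp only [hd] at key
  have e := hsub fun y => f y * log (f y) - (c * deriv f y) ^ 2 / (2 * f y)
  rw [e] at key
  have cf := hf.continuous
  have ch : Continuous (deriv f) := hf.continuous_deriv le_rfl
  have i1 : IntervalIntegrable (fun y => f y * log (f y)) volume a b :=
    (continuous_mul_log.comp cf).intervalIntegrable _ _
  have i2 : IntervalIntegrable (fun y => deriv f y ^ 2 / f y) volume a b := by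
    refine ContinuousOn.intervalIntegrable ?_
    rw [Set.uIcc_of_le hab.le]
    exact (ch.pow 2).continuousOn.div cf.continuousOn fun x hx => (hpos x hx).ne'
  have e2 : ∫ y in a..b, (f y * log (f y) - (c * deriv f y) ^ 2 / (2 * f y))
      = (∫ y in a..b, f y * log (f y)) - c ^ 2 / 2 * ∫ y in a..b, deriv f y ^ 2 / f y := by
    rw [← intervalIntegral.integral_const_mul, ← integral_sub i1 (i2.const_mul _)]
    refine integral_congr fun y _ => ?_
    ring
  rw [e2, inv_mul_le_iff₀ hc0] at key
  have hcc : 2 * π ^ 2 / (b - a) ^ 2 = (c ^ 2 / 2)⁻¹ := by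
    rw [hc]; field_simp
  rw [hcc, inv_mul_le_iff₀ (by positivity)]
  have : c * (π * (m * log m)) = (b - a) * m * log m := by rw [← hcπ]; ring
  linarith
end

section
/- For 0 < ε < 1 define f_ε : [0,1] → ℝ by f_ε(x) = √(1−ε²) + √2 · ε · cos(πx). Then the ratio (∫₀¹ f_ε'(x)² dx) / (∫₀¹ f_ε(x)² log f_ε(x) dx) tends to π² as ε tends to 0 from the right. -/
/-!
Write `s = √(1 - ε²)` and `f = s + √2 ε cos(πx)`. The numerator is exactly `π² ε²`. For the
denominator, Taylor expansion at `1` gives `t² log t = (3/2) t² - 2 t + 1/2 + O(|t - 1|³)`, and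
since `∫ f = s` and `∫ f² = 1`, the quadratic part integrates to `2 - 2 s = 2 ε² / (1 + s)`.
As `|f - 1| ≤ 3 ε`, the remainder is `O(ε³)`, so the denominator divided by `ε²` tends to `1`.
-/

open Real MeasureTheory intervalIntegral Filter

/-- Second-order Taylor expansion of `t ^ 2 * log t` at `1`, with an explicit cubic remainder. -/
theorem abs_sq_mul_log_sub_le {t : ℝ} (ht : |t - 1| ≤ 1 / 2) :
    |t ^ 2 * Real.log t - (3 / 2 * t ^ 2 - 2 * t + 1 / 2)| ≤ 5 * |t - 1| ^ 3 := by
  obtain ⟨u, rfl⟩ : ∃ u, t = 1 + u := ⟨t - 1, by ring⟩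
  rw [add_sub_cancel_left] at *
  have h := Real.abs_log_sub_add_sum_range_le (x := -u) (by rw [abs_neg]; linarith) 2
  simp only [Finset.sum_range_succ, Finset.sum_range_zero, abs_neg] at h
  norm_num at h
  have h2 : |u| ^ 3 / (1 - |u|) ≤ 2 * |u| ^ 3 := by
    rw [div_le_iff₀ (by linarith)]
    nlinarith [pow_nonneg (abs_nonneg u) 3]
  set E := -u + u ^ 2 / 2 + Real.log (1 + u) with hE
  have h3 : |E| ≤ 2 * |u| ^ 3 := h.trans h2
  have key : (1 + u) ^ 2 * Real.log (1 + u) - (3 / 2 * (1 + u) ^ 2 - 2 * (1 + u) + 1 / 2)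
      = (1 + u) ^ 2 * E + -(u ^ 4 / 2) := by
    rw [hE]; ring
  have h4 : |(1 + u) ^ 2| ≤ 9 / 4 := by
    rw [abs_of_nonneg (sq_nonneg _)]
    have := abs_le.1 ht
    nlinarith
  have h5 : |-(u ^ 4 / 2)| ≤ 1 / 4 * |u| ^ 3 := by
    rw [abs_neg, abs_div, abs_pow, abs_two]
    nlinarith [pow_nonneg (abs_nonneg u) 3]
  rw [key]
  calc _ ≤ |(1 + u) ^ 2| * |E| + |-(u ^ 4 / 2)| := by
          rw [← abs_mul]; exact abs_add_le _ _
    _ ≤ 9 / 4 * (2 * |u| ^ 3) + 1 / 4 * |u| ^ 3 := by gcongr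
    _ ≤ _ := by nlinarith [pow_nonneg (abs_nonneg u) 3]

theorem integral_cos_pi_mul : ∫ x in (0:ℝ)..1, Real.cos (π * x) = 0 := by
  rw [intervalIntegral.integral_comp_mul_left (fun y => Real.cos y) Real.pi_ne_zero]
  simp

theorem integral_cos_pi_mul_sq : ∫ x in (0:ℝ)..1, Real.cos (π * x) ^ 2 = 1 / 2 := by
  rw [intervalIntegral.integral_comp_mul_left (fun y => Real.cos y ^ 2) Real.pi_ne_zero]
  simp [integral_cos_sq]
  field_simp

theorem integral_sin_pi_mul_sq : ∫ x in (0:ℝ)..1, Real.sin (π * x) ^ 2 = 1 / 2 := by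
  rw [intervalIntegral.integral_comp_mul_left (fun y => Real.sin y ^ 2) Real.pi_ne_zero]
  simp [integral_sin_sq]
  field_simp

theorem integral_deriv_sq (s ε : ℝ) :
    (∫ x in (0:ℝ)..1, (deriv (fun y => s + Real.sqrt 2 * ε * Real.cos (π * y)) x) ^ 2)
      = π ^ 2 * ε ^ 2 := by
  have hd : ∀ x, (deriv (fun y => s + Real.sqrt 2 * ε * Real.cos (π * y)) x) ^ 2
      = (2 * ε ^ 2 * π ^ 2) * Real.sin (π * x) ^ 2 := by
    intro x
    have h1 : HasDerivAt (fun y => s + Real.sqrt 2 * ε * Real.cos (π * y))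
        (Real.sqrt 2 * ε * (-Real.sin (π * x) * (π * 1))) x :=
      ((((hasDerivAt_id x).const_mul π).cos).const_mul _).const_add s
    rw [h1.deriv]
    have := Real.sq_sqrt (show (0:ℝ) ≤ 2 by norm_num)
    linear_combination (ε ^ 2 * π ^ 2 * Real.sin (π * x) ^ 2) * this
  simp_rw [hd]
  rw [intervalIntegral.integral_const_mul, integral_sin_pi_mul_sq]
  ring

/-- The integral of the Taylor polynomial along `f`, which reduces to `2 - 2 s` because `∫ f = s`
and `∫ f² = 1`. -/
theorem integral_quadratic (s ε : ℝ) (hs : s ^ 2 = 1 - ε ^ 2) :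
    (∫ x in (0:ℝ)..1, (3 / 2 * (s + Real.sqrt 2 * ε * Real.cos (π * x)) ^ 2
      - 2 * (s + Real.sqrt 2 * ε * Real.cos (π * x)) + 1 / 2)) = 2 - 2 * s := by
  have h2 := Real.sq_sqrt (show (0:ℝ) ≤ 2 by norm_num)
  have he : ∀ x, (3 / 2 * (s + Real.sqrt 2 * ε * Real.cos (π * x)) ^ 2
      - 2 * (s + Real.sqrt 2 * ε * Real.cos (π * x)) + 1 / 2)
      = (3 / 2 * s ^ 2 - 2 * s + 1 / 2) + (3 * s - 2) * (Real.sqrt 2 * ε) * Real.cos (π * x)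
        + 3 * ε ^ 2 * Real.cos (π * x) ^ 2 := by
    intro x
    linear_combination (3 / 2 * ε ^ 2 * Real.cos (π * x) ^ 2) * h2
  simp_rw [he]
  rw [intervalIntegral.integral_add, intervalIntegral.integral_add,
    intervalIntegral.integral_const_mul, intervalIntegral.integral_const_mul,
    integral_cos_pi_mul, integral_cos_pi_mul_sq, intervalIntegral.integral_const]
  · simp only [smul_eq_mul]
    linear_combination (3 / 2) * hs
  all_goals exact Continuous.intervalIntegrable (by fun_prop) _ _

theorem abs_integral_sq_mul_log_sub_le {ε : ℝ} (h0 : 0 < ε) (h1 : ε ≤ 1 / 6) :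
    |(∫ x in (0:ℝ)..1,
        (Real.sqrt (1 - ε ^ 2) + Real.sqrt 2 * ε * Real.cos (π * x)) ^ 2 *
          Real.log (Real.sqrt (1 - ε ^ 2) + Real.sqrt 2 * ε * Real.cos (π * x)))
      - (2 - 2 * Real.sqrt (1 - ε ^ 2))| ≤ 135 * ε ^ 3 := by
  have hs : Real.sqrt (1 - ε ^ 2) ^ 2 = 1 - ε ^ 2 := Real.sq_sqrt (by nlinarith)
  have hs0 := Real.sqrt_nonneg (1 - ε ^ 2)
  set s := Real.sqrt (1 - ε ^ 2)
  have hsle : s ≤ 1 := by nlinarith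
  have hsge : 1 - ε ≤ s := by nlinarith
  have h2 := Real.sq_sqrt (show (0:ℝ) ≤ 2 by norm_num)
  have h2' : Real.sqrt 2 ≤ 2 := by nlinarith [Real.sqrt_nonneg 2]
  have hb : ∀ x, |s + Real.sqrt 2 * ε * Real.cos (π * x) - 1| ≤ 3 * ε := by
    intro x
    have e1 : |Real.sqrt 2 * ε * Real.cos (π * x)| ≤ 2 * ε * 1 := by
      rw [abs_mul, abs_of_nonneg (by positivity : 0 ≤ Real.sqrt 2 * ε)]
      gcongr
      exact Real.abs_cos_le_one _
    obtain ⟨e2, e3⟩ := abs_le.1 e1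
    exact abs_le.2 ⟨by linarith, by linarith⟩
  have hpos : ∀ x, s + Real.sqrt 2 * ε * Real.cos (π * x) ≠ 0 := by
    intro x hx
    have := hb x
    rw [hx] at this
    norm_num at this
    linarith
  -- The bound `|f - 1| ≤ 3 ε ≤ 1 / 2` gives the constant `5 * 3 ^ 3 = 135`.
  rw [← integral_quadratic s ε hs, ← intervalIntegral.integral_sub]
  · have := intervalIntegral.norm_integral_le_of_norm_le_const (a := (0:ℝ)) (b := 1)
      (C := 135 * ε ^ 3)
      (f := fun x => (s + Real.sqrt 2 * ε * Real.cos (π * x)) ^ 2 *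
          Real.log (s + Real.sqrt 2 * ε * Real.cos (π * x))
        - (3 / 2 * (s + Real.sqrt 2 * ε * Real.cos (π * x)) ^ 2
          - 2 * (s + Real.sqrt 2 * ε * Real.cos (π * x)) + 1 / 2)) ?_
    · simpa using this
    · intro x _
      rw [Real.norm_eq_abs]
      calc _ ≤ _ := abs_sq_mul_log_sub_le ((hb x).trans (by linarith))
        _ ≤ 5 * (3 * ε) ^ 3 := by gcongr; exact hb x
        _ = _ := by ring
  · apply Continuous.intervalIntegrable
    exact Continuous.mul (by fun_prop) (Continuous.log (by fun_prop) hpos)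
  · exact Continuous.intervalIntegrable (by fun_prop) _ _

theorem tendsto_integral_sq_mul_log_div_sq :
    Tendsto (fun ε : ℝ => (∫ x in (0:ℝ)..1,
        (Real.sqrt (1 - ε ^ 2) + Real.sqrt 2 * ε * Real.cos (π * x)) ^ 2 *
          Real.log (Real.sqrt (1 - ε ^ 2) + Real.sqrt 2 * ε * Real.cos (π * x))) / ε ^ 2)
      (nhdsWithin 0 (Set.Ioi 0)) (nhds 1) := by
  have hmain : Tendsto (fun ε : ℝ => 2 / (1 + Real.sqrt (1 - ε ^ 2)))
      (nhdsWithin 0 (Set.Ioi 0)) (nhds 1) := by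
    have hc : Continuous (fun ε : ℝ => 2 / (1 + Real.sqrt (1 - ε ^ 2))) :=
      Continuous.div (by fun_prop) (by fun_prop) (fun x => by positivity)
    have h := hc.tendsto 0
    norm_num at h
    exact h.mono_left nhdsWithin_le_nhds
  have hlin : Tendsto (fun ε : ℝ => 135 * ε) (nhdsWithin 0 (Set.Ioi 0)) (nhds 0) := by
    have h := (show Continuous (fun ε : ℝ => 135 * ε) by fun_prop).tendsto 0
    norm_num at h
    exact h.mono_left nhdsWithin_le_nhds
  have hev : ∀ᶠ ε : ℝ in nhdsWithin 0 (Set.Ioi 0), 0 < ε ∧ ε ≤ 1 / 6 := by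
    filter_upwards [Ioc_mem_nhdsGT (show (0:ℝ) < 1 / 6 by norm_num)] with ε hε using hε
  have hdiff := squeeze_zero_norm' (f := fun ε : ℝ => (∫ x in (0:ℝ)..1,
        (Real.sqrt (1 - ε ^ 2) + Real.sqrt 2 * ε * Real.cos (π * x)) ^ 2 *
          Real.log (Real.sqrt (1 - ε ^ 2) + Real.sqrt 2 * ε * Real.cos (π * x))) / ε ^ 2
        - 2 / (1 + Real.sqrt (1 - ε ^ 2))) (hev.mono ?_) hlin
  · simpa using hdiff.add hmain
  · rintro ε ⟨h0, h1⟩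
    have hs : Real.sqrt (1 - ε ^ 2) ^ 2 = 1 - ε ^ 2 := Real.sq_sqrt (by nlinarith)
    have hs0 := Real.sqrt_nonneg (1 - ε ^ 2)
    have e : 2 / (1 + Real.sqrt (1 - ε ^ 2)) = (2 - 2 * Real.sqrt (1 - ε ^ 2)) / ε ^ 2 := by
      rw [div_eq_div_iff (by positivity) (by positivity)]
      linear_combination 2 * hs
    rw [e, ← sub_div, Real.norm_eq_abs, abs_div, abs_of_pos (pow_pos h0 2),
      div_le_iff₀ (pow_pos h0 2)]
    calc _ ≤ _ := abs_integral_sq_mul_log_sub_le h0 h1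
      _ = _ := by ring

/-- The family `f_ε(x) = √(1−ε²) + √2 ε cos(πx)` of near-extremizers: the ratio
`(∫₀¹ f_ε'²) / (∫₀¹ f_ε² log f_ε)` tends to `π²` as `ε → 0⁺`. -/
theorem logSobolev_ratio_tendsto_pi_sq :
    Tendsto
      (fun ε : ℝ =>
        (∫ x in (0:ℝ)..1,
            (deriv (fun y => Real.sqrt (1 - ε ^ 2) + Real.sqrt 2 * ε * Real.cos (π * y)) x) ^ 2) /
          (∫ x in (0:ℝ)..1,
            (Real.sqrt (1 - ε ^ 2) + Real.sqrt 2 * ε * Real.cos (π * x)) ^ 2 *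
              Real.log (Real.sqrt (1 - ε ^ 2) + Real.sqrt 2 * ε * Real.cos (π * x))))
      (nhdsWithin 0 (Set.Ioi 0)) (nhds (π ^ 2)) := by
  have h := (tendsto_const_nhds (x := π ^ 2)).div tendsto_integral_sq_mul_log_div_sq one_ne_zero
  rw [div_one] at h
  refine h.congr fun ε => ?_
  rw [integral_deriv_sq, Pi.div_apply, div_div_eq_mul_div]
end

section
/- The constant π² in the interval log-Sobolev inequality is best possible: for every constant C > π² there exists a non-negative C¹ function f on [0,1] with ∫₀¹ f(x)² dx = 1 such that C ∫₀¹ f(x)² log f(x) dx > ∫₀¹ f'(x)² dx. -/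
/-!
Take `f x = a + b cos (π x)` with `a = √(1 - ε²)` and `b = √2 ε`. Then `∫ f² = 1` and
`∫ f'² = π² ε²`, so it suffices that `∫ f² log f ≥ k ε²` for some `k` with `C k > π²`.

This follows by integrating `t² log t ≥ (t² - 1) / 2 + k (t - 1)²` at `t = f x`, an inequality valid
for `t ≥ 2 k - 1` (`sq_mul_log_ge`): the first term integrates to zero by the normalization, and
`∫ (f - 1)² = 2 - 2 a ≥ ε²`. Since `f ≥ 1 - 3 ε`, one may take `k = 1 - 3 ε / 2`, which is as close
to `1` as needed when `ε` is small.
-/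

open Real MeasureTheory intervalIntegral

/-- The function here is `log t - ((t ^ 2 - 1) / 2 + k * (t - 1) ^ 2) / t ^ 2`, expanded. -/
theorem hasDerivAt_logGap (k t : ℝ) (ht : 0 < t) :
    HasDerivAt (fun t : ℝ => Real.log t - 1 / 2 + (t⁻¹) ^ 2 / 2 - k * (1 - t⁻¹) ^ 2)
      ((t - 1) * (t - (2 * k - 1)) / t ^ 3) t := by
  have h1 := Real.hasDerivAt_log ht.ne'
  have h2 := hasDerivAt_inv ht.ne'
  have h := ((h1.sub_const (1 / 2)).add ((h2.pow 2).div_const 2)).sub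
    (((h2.const_sub 1).pow 2).const_mul k)
  refine HasDerivAt.congr_deriv h ?_
  push_cast
  simp only [pow_one]
  field_simp
  ring

/-- The difference of the two sides, divided by `t ^ 2`, has derivative
`(t - 1) (t - (2 k - 1)) / t ^ 3` and hence attains its minimum `0` on `[2 k - 1, ∞)` at `1`. -/
theorem sq_mul_log_ge {k t : ℝ} (hk : 1 / 2 < k) (hk1 : k ≤ 1) (ht : 2 * k - 1 ≤ t) :
    (t ^ 2 - 1) / 2 + k * (t - 1) ^ 2 ≤ t ^ 2 * Real.log t := by
  have ht0 : 0 < t := by linarith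
  set g : ℝ → ℝ := fun t => Real.log t - 1 / 2 + (t⁻¹) ^ 2 / 2 - k * (1 - t⁻¹) ^ 2 with hg
  have hd : ∀ s, 0 < s → HasDerivAt g ((s - 1) * (s - (2 * k - 1)) / s ^ 3) s :=
    fun s hs => hasDerivAt_logGap k s hs
  have hg1 : g 1 = 0 := by simp [hg]
  have key : 0 ≤ g t := by
    rcases le_total 1 t with h | h
    · have hm : MonotoneOn g (Set.Ici 1) := by
        apply monotoneOn_of_deriv_nonneg (convex_Ici 1)
        · exact fun s hs => (hd s (by have : (1:ℝ) ≤ s := hs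
                                      linarith)).continuousAt.continuousWithinAt
        · exact fun s hs => (hd s (by rw [interior_Ici] at hs
                                      have : (1:ℝ) < s := hs
                                      linarith)).differentiableAt.differentiableWithinAt
        · intro s hs
          rw [interior_Ici] at hs
          have hs' : (1:ℝ) < s := hs
          rw [(hd s (by linarith)).deriv]
          exact div_nonneg (mul_nonneg (by linarith) (by linarith)) (by positivity)
      rw [← hg1]
      exact hm Set.self_mem_Ici h h
    · have hm : AntitoneOn g (Set.Icc (2 * k - 1) 1) := by
        apply antitoneOn_of_deriv_nonpos (convex_Icc _ 1)
        · exact fun s hs => (hd s (by linarith [hs.1])).continuousAt.continuousWithinAt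
        · exact fun s hs => (hd s (by rw [interior_Icc] at hs
                                      linarith [hs.1])).differentiableAt.differentiableWithinAt
        · intro s hs
          rw [interior_Icc] at hs
          have hs0 : 0 < s := by linarith [hs.1]
          rw [(hd s hs0).deriv]
          exact div_nonpos_of_nonpos_of_nonneg
            (mul_nonpos_of_nonpos_of_nonneg (by linarith [hs.2]) (by linarith [hs.1]))
            (by positivity)
      rw [← hg1]
      exact hm ⟨ht, h⟩ ⟨by linarith, le_rfl⟩ h
  have h2 : t ^ 2 * g t =
      t ^ 2 * Real.log t - ((t ^ 2 - 1) / 2 + k * (t - 1) ^ 2) := by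
    simp only [hg]
    field_simp
    ring
  have := mul_nonneg (sq_nonneg t) key
  linarith

theorem integral_quadratic_cos (A B D : ℝ) :
    (∫ x in (0:ℝ)..1, (A + B * Real.cos (π * x) + D * Real.cos (π * x) ^ 2)) = A + D / 2 := by
  have h1 : (∫ x in (0:ℝ)..1, Real.cos (π * x)) = 0 := by
    rw [intervalIntegral.integral_comp_mul_left (fun y => Real.cos y) Real.pi_ne_zero]
    simp
  have h2 : (∫ x in (0:ℝ)..1, Real.cos (π * x) ^ 2) = 1 / 2 := by
    rw [intervalIntegral.integral_comp_mul_left (fun y => Real.cos y ^ 2) Real.pi_ne_zero,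
      integral_cos_sq]
    simp
    field_simp
  rw [intervalIntegral.integral_add, intervalIntegral.integral_add,
    intervalIntegral.integral_const_mul, intervalIntegral.integral_const_mul, h1, h2]
  · simp
    ring
  all_goals exact Continuous.intervalIntegrable (by fun_prop) _ _

theorem logSobolev_pi_sq_sharp (C : ℝ) (hC : π ^ 2 < C) :
    ∃ f : ℝ → ℝ, ContDiff ℝ 1 f ∧ (∀ x ∈ Set.Icc (0:ℝ) 1, 0 ≤ f x) ∧
      (∫ x in (0:ℝ)..1, (f x) ^ 2) = 1 ∧
      (∫ x in (0:ℝ)..1, (deriv f x) ^ 2) <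
        C * ∫ x in (0:ℝ)..1, (f x) ^ 2 * Real.log (f x) := by
  have hpi : 0 < π ^ 2 := by positivity
  have hC0 : 0 < C := hpi.trans hC
  -- With this choice `C * (1 - 3 * ε / 2)` is the midpoint of `π ^ 2` and `C`.
  obtain ⟨ε, hε⟩ : ∃ ε, ε = (C - π ^ 2) / (3 * C) := ⟨_, rfl⟩
  have hεC : 3 * C * ε = C - π ^ 2 := by rw [hε]; field_simp
  have hε0 : 0 < ε := by rw [hε]; exact div_pos (by linarith) (by linarith)
  have hε1 : ε < 1 / 3 := by
    rw [hε, div_lt_iff₀ (by linarith)]; linarith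
  obtain ⟨a, ha⟩ : ∃ a, a = √(1 - ε ^ 2) := ⟨_, rfl⟩
  obtain ⟨b, hb⟩ : ∃ b, b = √2 * ε := ⟨_, rfl⟩
  have ha2 : a ^ 2 = 1 - ε ^ 2 := by rw [ha]; exact Real.sq_sqrt (by nlinarith)
  have ha0 : 0 ≤ a := by rw [ha]; positivity
  have hb2 : b ^ 2 = 2 * ε ^ 2 := by rw [hb, mul_pow, Real.sq_sqrt (by norm_num)]
  have hb0 : 0 ≤ b := by rw [hb]; positivity
  have ha1 : a ≤ 1 - ε ^ 2 / 2 := by nlinarith [sq_nonneg (a - 1)]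
  have halow : 1 - ε ^ 2 ≤ a := by nlinarith [sq_nonneg ε]
  have hbup : b ≤ 2 * ε := by nlinarith
  have hlow : ∀ x, 1 - 3 * ε ≤ a + b * Real.cos (π * x) := by
    intro x
    nlinarith [Real.neg_one_le_cos (π * x)]
  have hpos : ∀ x, 0 < a + b * Real.cos (π * x) := fun x => by linarith [hlow x]
  have hderiv : ∀ x, deriv (fun x => a + b * Real.cos (π * x)) x =
      -(b * π * Real.sin (π * x)) := by
    intro x
    have h := ((((hasDerivAt_id x).const_mul π).cos).const_mul b).const_add a
    simp only [id] at h
    rw [h.deriv]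
    ring
  have hint : (∫ x in (0:ℝ)..1, (a + b * Real.cos (π * x)) ^ 2) = 1 := by
    have h := integral_quadratic_cos (a ^ 2) (2 * a * b) (b ^ 2)
    rw [ha2, hb2] at h
    rw [show (1:ℝ) - ε ^ 2 + 2 * ε ^ 2 / 2 = 1 by ring] at h
    rw [← h]
    congr 1
    ext x
    rw [← ha2, ← hb2]
    ring
  refine ⟨fun x => a + b * Real.cos (π * x), by fun_prop, fun x _ => (hpos x).le, hint, ?_⟩
  have hE : (∫ x in (0:ℝ)..1, (deriv (fun x => a + b * Real.cos (π * x)) x) ^ 2) =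
      π ^ 2 * ε ^ 2 := by
    have h := integral_quadratic_cos (b ^ 2 * π ^ 2) 0 (-(b ^ 2 * π ^ 2))
    rw [show b ^ 2 * π ^ 2 + -(b ^ 2 * π ^ 2) / 2 = π ^ 2 * ε ^ 2 by rw [hb2]; ring] at h
    rw [← h]
    congr 1
    ext x
    rw [hderiv, neg_sq, mul_pow, Real.sin_sq]
    ring
  have hL : (1 - 3 * ε / 2) * ε ^ 2 ≤
      ∫ x in (0:ℝ)..1, (a + b * Real.cos (π * x)) ^ 2 * Real.log (a + b * Real.cos (π * x)) := by
    have h := integral_quadratic_cos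
      ((a ^ 2 - 1) / 2 + (1 - 3 * ε / 2) * (a - 1) ^ 2)
      (a * b + (1 - 3 * ε / 2) * (2 * (a - 1) * b))
      (b ^ 2 / 2 + (1 - 3 * ε / 2) * b ^ 2)
    calc (1 - 3 * ε / 2) * ε ^ 2
        ≤ (1 - 3 * ε / 2) * (2 - 2 * a) :=
          mul_le_mul_of_nonneg_left (by linarith) (by linarith)
      _ = _ := by
          rw [hb2]
          linear_combination (-(1 / 2) - (1 - 3 * ε / 2)) * ha2
      _ = _ := h.symm
      _ ≤ _ := by
          apply intervalIntegral.integral_mono_on zero_le_one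
          · exact Continuous.intervalIntegrable (by fun_prop) _ _
          · apply Continuous.intervalIntegrable
            exact (by fun_prop : Continuous fun x => (a + b * Real.cos (π * x)) ^ 2).mul
              (Continuous.log (by fun_prop) fun x => (hpos x).ne')
          · intro x _
            have := sq_mul_log_ge (k := 1 - 3 * ε / 2) (by linarith) (by linarith)
              (by linarith [hlow x] : 2 * (1 - 3 * ε / 2) - 1 ≤ a + b * Real.cos (π * x))
            refine le_trans (le_of_eq ?_) this
            ring
  rw [hE]
  have hgap : π ^ 2 < C * (1 - 3 * ε / 2) := by linarith
  calc π ^ 2 * ε ^ 2 < C * (1 - 3 * ε / 2) * ε ^ 2 :=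
        mul_lt_mul_of_pos_right hgap (by positivity)
    _ = C * ((1 - 3 * ε / 2) * ε ^ 2) := by ring
    _ ≤ _ := mul_le_mul_of_nonneg_left hL hC0.le
end
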